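/- Let A be a Calabi–Yau Poisson algebra of dimension ℓ over k with modular derivation δ. Then for every right Poisson A-module M and every integer i there is an isomorphism HP^i(M) ≅ HP_{ℓ−i}(M^δ), where M^δ is the twist of M by δ. -/

import Mathlib

universe u

/-! ### Basic Poisson algebra notions -/

/-- A Poisson algebra structure on a commutative `k`-algebra `A`:
a `k`-bilinear Lie bracket satisfying the Leibniz rule. -/
structure PoissonAlgebra (k A : Type*) [CommRing k] [CommRing A] [Algebra k A] where
  br : A →ₗ[k] A →ₗ[k] A
  skew : ∀ a b, br a b = - br b a
  jacobi : ∀ a b c, br a (br b c) + br b (br c a) + br c (br a b) = 0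
  leibniz : ∀ a b c, br (a * b) c = a * br b c + br a c * b

/-- A left Poisson module structure on an `A`-module `M`, with bracket `br a m = {a, m}`. -/
structure LeftPMod {k A : Type*} [CommRing k] [CommRing A] [Algebra k A]
    (P : PoissonAlgebra k A) (M : Type*) [AddCommGroup M] [Module k M] [Module A M]
    [IsScalarTower k A M] where
  br : A →ₗ[k] M →ₗ[k] M
  lie : ∀ a b m, br (P.br a b) m = br a (br b m) - br b (br a m)
  mul : ∀ a b m, br (a * b) m = a • br b m + b • br a m
  act : ∀ a b m, br a (b • m) = P.br a b • m + b • br a m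

/-- A right Poisson module structure on an `A`-module `M`, with bracket `br m a = {m, a}`. -/
structure RightPMod {k A : Type*} [CommRing k] [CommRing A] [Algebra k A]
    (P : PoissonAlgebra k A) (M : Type*) [AddCommGroup M] [Module k M] [Module A M]
    [IsScalarTower k A M] where
  br : M →ₗ[k] A →ₗ[k] M
  lie : ∀ m a b, br m (P.br a b) = br (br m a) b - br (br m b) a
  mul : ∀ m a b, br m (a * b) = a • br m b + b • br m a
  act : ∀ b m a, br (b • m) a = P.br b a • m + b • br m a

/-- A Poisson derivation of a Poisson algebra. -/
structure PoissonDerivation {k A : Type*} [CommRing k] [CommRing A] [Algebra k A]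
    (P : PoissonAlgebra k A) where
  d : A →ₗ[k] A
  leibniz : ∀ a b, d (a * b) = a * d b + d a * b
  compat : ∀ a b, d (P.br a b) = P.br (d a) b + P.br a (d b)

/-- A log-Hamiltonian derivation is one of the form `a ↦ u⁻¹ * {u, a}` for a unit `u`. -/
def PoissonDerivation.IsLogHamiltonian {k A : Type*} [CommRing k] [CommRing A] [Algebra k A]
    {P : PoissonAlgebra k A} (δ : PoissonDerivation P) : Prop :=
  ∃ u : Aˣ, ∀ a : A, (u : A) * δ.d a = P.br (u : A) a

section HP
set_option maxSynthPendingDepth 3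

open TensorProduct

variable (k : Type u) (A : Type u) [CommRing k] [CommRing A] [Algebra k A]

/-- The wedge `d v₀ ∧ d v₁ ∧ ⋯ ∧ d vₙ₋₁` of Kähler differentials, as an element of the
`n`-th exterior power `⋀[A]^n Ω[A⁄k]`. -/
noncomputable def wedgeD (n : ℕ) (v : Fin n → A) : (⋀[A]^n (Ω[A⁄k]) : Submodule A _) :=
  ⟨ExteriorAlgebra.ιMulti A n (fun i => KaehlerDifferential.D k A (v i)),
    ExteriorAlgebra.ιMulti_range A n (Set.mem_range_self _)⟩

variable {k A}
variable (P : PoissonAlgebra k A)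
variable (M : Type u) [AddCommGroup M] [Module k M] [Module A M] [IsScalarTower k A M]

/-- The Poisson homology chain complex of a right Poisson module `M`: the `n`-th term is
`M ⊗[A] ⋀[A]^n Ω[A⁄k]` and the boundary maps are characterized on generators
`m ⊗ (d a₁ ∧ ⋯ ∧ d aₙ)` by the Brylinski-type formula (written 0-indexed):
`∂(m ⊗ da₀∧⋯∧daₙ) = ∑ᵢ (-1)ⁱ {m,aᵢ} ⊗ da₀∧⋯(omit i)⋯∧daₙ`
`+ ∑_{i<j} (-1)^{i+j} m ⊗ d{aᵢ,aⱼ} ∧ da₀∧⋯(omit i, j)⋯∧daₙ`.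
In the second sum we index `j = i.succAbove j'` with `i ≤ j'`, so that the sign becomes
`(-1)^{i+j'+1}` and the omitted family is `j'.removeNth (i.removeNth v)`. -/
structure PHomologyData (R : RightPMod P M) where
  d : ∀ n : ℕ,
    (M ⊗[A] (⋀[A]^(n+1) (Ω[A⁄k]) : Submodule A _)) →ₗ[k]
      (M ⊗[A] (⋀[A]^n (Ω[A⁄k]) : Submodule A _))
  d_zero : ∀ (m : M) (v : Fin 1 → A),
    d 0 (m ⊗ₜ[A] wedgeD k A 1 v)
      = ∑ i : Fin 1, ((-1 : ℤ) ^ (i : ℕ)) •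
          ((R.br m (v i)) ⊗ₜ[A] wedgeD k A 0 (i.removeNth v))
  d_succ : ∀ (q : ℕ) (m : M) (v : Fin (q + 2) → A),
    d (q + 1) (m ⊗ₜ[A] wedgeD k A (q + 2) v)
      = (∑ i : Fin (q + 2), ((-1 : ℤ) ^ (i : ℕ)) •
            ((R.br m (v i)) ⊗ₜ[A] wedgeD k A (q + 1) (i.removeNth v)))
        + ∑ i : Fin (q + 2), ∑ j : Fin (q + 1),
            if (i : ℕ) ≤ (j : ℕ) then
              ((-1 : ℤ) ^ ((i : ℕ) + (j : ℕ) + 1)) •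
                (m ⊗ₜ[A] wedgeD k A (q + 1)
                  (Fin.cons (P.br (v i) (i.removeNth v j)) (j.removeNth (i.removeNth v))))
            else 0

variable {P M}

/-- The Poisson homology of a right Poisson module, computed from the boundary data. -/
noncomputable def PHomologyData.homology {R : RightPMod P M} (D : PHomologyData P M R) :
    ℕ → Type u
  | 0 => (M ⊗[A] (⋀[A]^0 (Ω[A⁄k]) : Submodule A _)) ⧸ LinearMap.range (D.d 0)
  | n + 1 => LinearMap.ker (D.d n) ⧸
      (LinearMap.range (D.d (n + 1))).comap (LinearMap.ker (D.d n)).subtype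

noncomputable instance PHomologyData.homologyAddCommGroup {R : RightPMod P M}
    (D : PHomologyData P M R) : ∀ n, AddCommGroup (D.homology n)
  | 0 => by unfold PHomologyData.homology; infer_instance
  | n + 1 => by unfold PHomologyData.homology; infer_instance

noncomputable instance PHomologyData.homologyModule {R : RightPMod P M}
    (D : PHomologyData P M R) : ∀ n, Module k (D.homology n)
  | 0 => by unfold PHomologyData.homology; infer_instance
  | n + 1 => by unfold PHomologyData.homology; infer_instance

variable (P M)

/-- The submodule of alternating `n`-multilinear maps `Aⁿ → M` which are derivations in
each argument: the `n`-th term of the Poisson cohomology complex. -/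
def multiDer (k A : Type u) [CommRing k] [CommRing A] [Algebra k A]
    (M : Type u) [AddCommGroup M] [Module k M] [Module A M] [IsScalarTower k A M]
    (n : ℕ) : Submodule k (A [⋀^Fin n]→ₗ[k] M) where
  carrier := {f | ∀ (v : Fin n → A) (i : Fin n) (a b : A),
    f (Function.update v i (a * b))
      = a • f (Function.update v i b) + b • f (Function.update v i a)}
  zero_mem' := by intro v i a b; simp
  add_mem' := by
    intro f g hf hg v i a b
    simp only [AlternatingMap.add_apply, hf v i a b, hg v i a b, smul_add]
    abel
  smul_mem' := by
    intro c f hf v i a b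
    simp only [AlternatingMap.smul_apply, hf v i a b, smul_add]
    rw [smul_comm c a, smul_comm c b]

/-- The Poisson cohomology cochain complex of a right Poisson module `M`: the `n`-th
term is the module of alternating multiderivations `Aⁿ → M` and the Lichnerowicz
differential is characterized by
`δf(a₀,…,aₙ) = ∑ᵢ (-1)^{i+1} {f(a₀,…,(omit i),…,aₙ), aᵢ}`
`+ ∑_{i<j} (-1)^{i+j} f({aᵢ,aⱼ}, a₀, …, (omit i, j), …, aₙ)`,
again rewriting `j = i.succAbove j'` with `i ≤ j'` in the second sum. -/
structure PCohomologyData (R : RightPMod P M) where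
  δ : ∀ n : ℕ, ↥(multiDer k A M n) →ₗ[k] ↥(multiDer k A M (n + 1))
  δ_zero : ∀ (f : multiDer k A M 0) (v : Fin 1 → A),
    (δ 0 f : A [⋀^Fin 1]→ₗ[k] M) v
      = ∑ i : Fin 1, ((-1 : ℤ) ^ ((i : ℕ) + 1)) •
          R.br ((f : A [⋀^Fin 0]→ₗ[k] M) (i.removeNth v)) (v i)
  δ_succ : ∀ (n : ℕ) (f : multiDer k A M (n + 1)) (v : Fin (n + 2) → A),
    (δ (n + 1) f : A [⋀^Fin (n + 2)]→ₗ[k] M) v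
      = (∑ i : Fin (n + 2), ((-1 : ℤ) ^ ((i : ℕ) + 1)) •
            R.br ((f : A [⋀^Fin (n + 1)]→ₗ[k] M) (i.removeNth v)) (v i))
        + ∑ i : Fin (n + 2), ∑ j : Fin (n + 1),
            if (i : ℕ) ≤ (j : ℕ) then
              ((-1 : ℤ) ^ ((i : ℕ) + (j : ℕ) + 1)) •
                (f : A [⋀^Fin (n + 1)]→ₗ[k] M)
                  (Fin.cons (P.br (v i) (i.removeNth v j)) (j.removeNth (i.removeNth v)))
            else 0

variable {P M}

/-- The Poisson cohomology of a right Poisson module, computed from the cochain data. -/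
noncomputable def PCohomologyData.cohomology {R : RightPMod P M} (D : PCohomologyData P M R) :
    ℕ → Type u
  | 0 => LinearMap.ker (D.δ 0)
  | n + 1 => LinearMap.ker (D.δ (n + 1)) ⧸
      (LinearMap.range (D.δ n)).comap (LinearMap.ker (D.δ (n + 1))).subtype

noncomputable instance PCohomologyData.cohomologyAddCommGroup {R : RightPMod P M}
    (D : PCohomologyData P M R) : ∀ n, AddCommGroup (D.cohomology n)
  | 0 => by unfold PCohomologyData.cohomology; infer_instance
  | n + 1 => by unfold PCohomologyData.cohomology; infer_instance

noncomputable instance PCohomologyData.cohomologyModule {R : RightPMod P M}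
    (D : PCohomologyData P M R) : ∀ n, Module k (D.cohomology n)
  | 0 => by unfold PCohomologyData.cohomology; infer_instance
  | n + 1 => by unfold PCohomologyData.cohomology; infer_instance

end HP

set_option maxSynthPendingDepth 3
open TensorProduct

namespace PD
open ExteriorAlgebra

section Gen
variable {R V : Type*} [CommRing R] [AddCommGroup V] [Module R V]

/-- Extension of a linear form on `⋀^ℓ` to the exterior algebra by projection. -/
noncomputable def etil {ℓ : ℕ} (e : (⋀[R]^ℓ V : Submodule R _) →ₗ[R] R) :
    ExteriorAlgebra R V →ₗ[R] R :=
  e ∘ₗ (DirectSum.component R ℕ (fun i => (⋀[R]^i V : Submodule R _)) ℓ) ∘ₗ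
    (DirectSum.decomposeLinearEquiv (fun i : ℕ => (⋀[R]^i V : Submodule R _))).toLinearMap

lemma etil_coe {ℓ : ℕ} (e : (⋀[R]^ℓ V : Submodule R _) →ₗ[R] R)
    (x : (⋀[R]^ℓ V : Submodule R _)) : etil e (x : ExteriorAlgebra R V) = e x := by
  simp only [etil, LinearMap.comp_apply, LinearEquiv.coe_coe, DirectSum.decomposeLinearEquiv_apply, DirectSum.decompose_coe]
  erw [DirectSum.component.of]
  simp

noncomputable def proj (n : ℕ) : ExteriorAlgebra R V →ₗ[R] (⋀[R]^n V : Submodule R _) :=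
  (DirectSum.component R ℕ (fun i => (⋀[R]^i V : Submodule R _)) n) ∘ₗ
    (DirectSum.decomposeLinearEquiv (fun i : ℕ => (⋀[R]^i V : Submodule R _))).toLinearMap

lemma proj_coe {n : ℕ} (x : (⋀[R]^n V : Submodule R _)) :
    proj n (x : ExteriorAlgebra R V) = x := by
  simp only [proj, LinearMap.comp_apply, LinearEquiv.coe_coe, DirectSum.decomposeLinearEquiv_apply, DirectSum.decompose_coe]
  erw [DirectSum.component.of]
  simp

lemma vanish_of_le {ℓ n : ℕ} (h : ∀ x ∈ (⋀[R]^(ℓ+1) V : Submodule R _), x = 0) (hn : ℓ < n) :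
    ∀ x ∈ (⋀[R]^n V : Submodule R _), x = 0 := by
  obtain ⟨m, rfl⟩ := Nat.exists_eq_add_of_le hn
  have h0 : (⋀[R]^(ℓ+1) V : Submodule R (ExteriorAlgebra R V)) = ⊥ := (Submodule.eq_bot_iff _).2 h
  have : (⋀[R]^(ℓ+1+m) V : Submodule R (ExteriorAlgebra R V)) = ⊥ := by
    change LinearMap.range (ι R : V →ₗ[R] ExteriorAlgebra R V) ^ (ℓ+1) = ⊥ at h0
    change LinearMap.range (ι R : V →ₗ[R] ExteriorAlgebra R V) ^ (ℓ+1+m) = ⊥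
    rw [pow_add, h0, Submodule.bot_mul]
  exact (Submodule.eq_bot_iff _).1 this

lemma ι_mul_mem {n : ℕ} (v : V) {x : ExteriorAlgebra R V} (hx : x ∈ (⋀[R]^n V : Submodule R _)) :
    ι R v * x ∈ (⋀[R]^(n+1) V : Submodule R _) := by
  change _ ∈ LinearMap.range (ι R : V →ₗ[R] ExteriorAlgebra R V) ^ (n+1)
  rw [pow_succ']
  exact Submodule.mul_mem_mul (LinearMap.mem_range_self _ v) hx

lemma mul_mem' {n m : ℕ} {y x : ExteriorAlgebra R V} (hy : y ∈ (⋀[R]^n V : Submodule R _)) (hx : x ∈ (⋀[R]^m V : Submodule R _)) :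
    y * x ∈ (⋀[R]^(n+m) V : Submodule R _) := by
  change _ ∈ LinearMap.range (ι R : V →ₗ[R] ExteriorAlgebra R V) ^ (n+m)
  rw [pow_add]
  exact Submodule.mul_mem_mul hy hx

lemma ι_comm {n : ℕ} (v : V) {x : ExteriorAlgebra R V} (hx : x ∈ (⋀[R]^n V : Submodule R _)) :
    ι R v * x = (-1 : R)^n • (x * ι R v) := by
  induction hx using Submodule.pow_induction_on_left' with
  | algebraMap r => simp [Algebra.commutes]
  | add x y i hx hy h1 h2 => rw [mul_add, h1, h2, add_mul, smul_add]
  | mem_mul m hm i x hx ih =>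
    obtain ⟨w, rfl⟩ := hm
    have h1 : ι R v * ι R w = - (ι R w * ι R v) := by
      rw [eq_neg_iff_add_eq_zero]; exact ι_add_mul_swap v w
    rw [← mul_assoc, h1, neg_mul, mul_assoc, ih, pow_succ]
    simp [mul_assoc]

section Dual
variable {J : Type*} [Fintype J] (x : J → V) (φ : J → Module.Dual R V)

open CliffordAlgebra in
lemma euler (hφ : ∀ v, ∑ j, φ j v • x j = v) {n : ℕ} {y : ExteriorAlgebra R V}
    (hy : y ∈ (⋀[R]^n V : Submodule R _)) :
    ∑ j, ExteriorAlgebra.ι R (x j) * (contractLeft (Q := (0 : QuadraticForm R V)) (φ j) y : ExteriorAlgebra R V) = (n : R) • y := by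
  induction hy using Submodule.pow_induction_on_left' with
  | algebraMap r =>
    simp only [Nat.cast_zero, zero_smul]
    refine Finset.sum_eq_zero fun j _ => ?_
    erw [contractLeft_algebraMap]; simp
  | add x y i hx hy h1 h2 => simp only [map_add, mul_add, Finset.sum_add_distrib, h1, h2, smul_add]
  | mem_mul m hm i y hx ih =>
    obtain ⟨w, rfl⟩ := hm
    have key : ∀ j, ExteriorAlgebra.ι R (x j) * (contractLeft (Q := (0 : QuadraticForm R V)) (φ j) (ExteriorAlgebra.ι R w * y) : ExteriorAlgebra R V)
      = ExteriorAlgebra.ι R (φ j w • x j) * y + ExteriorAlgebra.ι R w * (ExteriorAlgebra.ι R (x j) * (contractLeft (Q := (0 : QuadraticForm R V)) (φ j) y : ExteriorAlgebra R V)) := by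
      intro j
      have h1 : ExteriorAlgebra.ι R (x j) * ExteriorAlgebra.ι R w = - (ExteriorAlgebra.ι R w * ExteriorAlgebra.ι R (x j)) := by
        rw [eq_neg_iff_add_eq_zero]; exact ι_add_mul_swap _ _
      erw [contractLeft_ι_mul]
      rw [mul_sub, map_smul, sub_eq_add_neg]
      congr 1
      · rw [smul_mul_assoc, mul_smul_comm]
      · change -(ExteriorAlgebra.ι R (x j) * (ExteriorAlgebra.ι R w * _)) = _
        rw [← mul_assoc, ← mul_assoc, h1, neg_mul, neg_neg]
    simp_rw [key]
    rw [Finset.sum_add_distrib, ← Finset.sum_mul, ← map_sum, hφ, ← Finset.mul_sum, ih]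
    push_cast
    rw [mul_smul_comm, add_smul, one_smul, add_comm]

open CliffordAlgebra in
lemma coeuler (hφ : ∀ v, ∑ j, φ j v • x j = v) {n : ℕ} {y : ExteriorAlgebra R V}
    (hy : y ∈ (⋀[R]^n V : Submodule R _)) :
    ∑ j, (contractLeft (Q := (0 : QuadraticForm R V)) (φ j) (ExteriorAlgebra.ι R (x j) * y) : ExteriorAlgebra R V)
      = (∑ j, φ j (x j) - (n : R)) • y := by
  rw [sub_smul, ← euler x φ hφ hy, Finset.sum_smul, ← Finset.sum_sub_distrib]
  refine Finset.sum_congr rfl fun j _ => ?_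
  erw [contractLeft_ι_mul]

open CliffordAlgebra in
/-- key reproducing identity -/
lemma keyK_aux {ℓ : ℕ} (e : (⋀[R]^ℓ V : Submodule R _) ≃ₗ[R] R) (hφ : ∀ v, ∑ j, φ j v • x j = v)
    (ht : ∑ j, φ j (x j) = (ℓ : R)) (hinv : ∀ n : ℕ, n ≠ 0 → IsUnit (n : R)) (q : ℕ) :
    ∀ p : ℕ, p + q = ℓ → ∃ (N : ℕ) (u : Fin N → ExteriorAlgebra R V) (w : Fin N → ExteriorAlgebra R V),
      (∀ i, u i ∈ (⋀[R]^q V : Submodule R _)) ∧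
      ∀ y ∈ (⋀[R]^p V : Submodule R _), y = ∑ i, etil e.toLinearMap (y * u i) • w i := by
  induction q with
  | zero =>
    rintro p rfl
    refine ⟨1, fun _ => 1, fun _ => (e.symm 1 : _), fun i => ?_, fun y hy => ?_⟩
    · change _ ∈ LinearMap.range (ι R : V →ₗ[R] ExteriorAlgebra R V) ^ 0
      simp
    · have := etil_coe e.toLinearMap ⟨y, hy⟩
      simp only at this
      simp only [mul_one, Finset.univ_unique, Finset.sum_const, Finset.card_singleton, one_smul]
      rw [this]
      have h2 : e.symm (e ⟨y, hy⟩) = e ⟨y, hy⟩ • e.symm 1 := by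
        rw [← map_smul, smul_eq_mul, mul_one]
      have h3 := congrArg Subtype.val h2
      simpa using h3
  | succ q ih =>
    intro p hp
    obtain ⟨N, u, w, hu, hw⟩ := ih (p+1) (by omega)
    obtain ⟨c, hc⟩ := (hinv (q+1) (by omega)).exists_right_inv
    classical
    let E := (Fintype.equivFin (J × Fin N))
    let σ : R := (-1)^p * c
    refine ⟨Fintype.card (J × Fin N), fun i => ExteriorAlgebra.ι R (x (E.symm i).1) * u (E.symm i).2,
      fun i => σ • (contractLeft (Q := (0 : QuadraticForm R V)) (φ (E.symm i).1) (w (E.symm i).2) : ExteriorAlgebra R V), fun i => ι_mul_mem _ (hu _), fun y hy => ?_⟩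
    rw [Equiv.sum_comp E.symm (fun a : J × Fin N => etil e.toLinearMap (y * (ExteriorAlgebra.ι R (x a.1) * u a.2)) • σ • (contractLeft (Q := (0 : QuadraticForm R V)) (φ a.1) (w a.2) : ExteriorAlgebra R V)), Fintype.sum_prod_type]
    have h1 := coeuler x φ hφ hy
    have h2 : ∀ j, (contractLeft (Q := (0 : QuadraticForm R V)) (φ j) (ExteriorAlgebra.ι R (x j) * y) : ExteriorAlgebra R V) = ∑ i, (-1 : R)^p • etil e.toLinearMap (y * (ExteriorAlgebra.ι R (x j) * u i)) • (contractLeft (Q := (0 : QuadraticForm R V)) (φ j) (w i) : ExteriorAlgebra R V) := by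
      intro j
      conv_lhs => rw [hw _ (ι_mul_mem (x j) hy)]
      rw [map_sum]
      refine Finset.sum_congr rfl fun i _ => ?_
      rw [ι_comm (x j) hy, smul_mul_assoc, map_smul, map_smul, mul_assoc, smul_assoc]
    have h3 : (∑ j, φ j (x j) - (p : R)) = ((q+1 : ℕ) : R) := by
      rw [ht, ← hp]; push_cast; ring
    rw [h3] at h1
    have h4 : y = c • (((q+1 : ℕ) : R) • y) := by
      rw [smul_smul, mul_comm, hc, one_smul]
    conv_lhs => rw [h4, ← h1]
    rw [Finset.smul_sum]
    refine Finset.sum_congr rfl fun j _ => ?_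
    rw [h2, Finset.smul_sum]
    refine Finset.sum_congr rfl fun i _ => ?_
    simp only [σ, smul_smul]
    congr 1; ring

lemma keyK {ℓ : ℕ} (e : (⋀[R]^ℓ V : Submodule R _) ≃ₗ[R] R) (hφ : ∀ v, ∑ j, φ j v • x j = v)
    (ht : ∑ j, φ j (x j) = (ℓ : R)) (hinv : ∀ n : ℕ, n ≠ 0 → IsUnit (n : R)) (p q : ℕ)
    (h : p + q = ℓ) : ∃ (N : ℕ) (u : Fin N → (⋀[R]^q V : Submodule R _)) (w : Fin N → (⋀[R]^p V : Submodule R _)),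
      ∀ y : (⋀[R]^p V : Submodule R _), y = ∑ i, etil e.toLinearMap (y * u i) • w i := by
  obtain ⟨N, u, w, hu, hw⟩ := keyK_aux x φ e hφ ht hinv q p h
  refine ⟨N, fun i => ⟨u i, hu i⟩, fun i => proj p (w i), fun y => ?_⟩
  have := congrArg (proj p) (hw y y.2)
  simpa [proj_coe] using this

lemma mul_comm' {p q : ℕ} {y z : ExteriorAlgebra R V} (hy : y ∈ (⋀[R]^p V : Submodule R _)) (hz : z ∈ (⋀[R]^q V : Submodule R _)) :
    y * z = (-1 : R)^(p*q) • (z * y) := by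
  induction hy using Submodule.pow_induction_on_left' with
  | algebraMap r => simp [Algebra.commutes]
  | add x y i hx hy h1 h2 => rw [mul_add, add_mul, h1, h2, smul_add]
  | mem_mul m hm i y hy ih =>
    obtain ⟨w, rfl⟩ := hm
    rw [mul_assoc, ih, mul_smul_comm, ← mul_assoc, ι_comm w hz, smul_mul_assoc, smul_smul, mul_assoc, Nat.succ_eq_add_one]
    congr 1; ring
end Dual
end Gen
end PD

namespace PD
open ExteriorAlgebra
section Gen
variable {R V : Type*} [CommRing R] [AddCommGroup V] [Module R V]

/-- If `⋀^ℓ V ≅ R` with `ℓ ≥ 1`, then `V/mV` has dimension at most `ℓ`. -/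
lemma finrank_le {ℓ : ℕ} (e : (⋀[R]^(ℓ+1) V : Submodule R _) ≃ₗ[R] R)
    (K : Type*) [Field K] [Algebra R K] (W : Type*) [AddCommGroup W] [Module R W] [Module K W]
    [IsScalarTower R K W] (π : V →ₗ[R] W) (hπ : Function.Surjective π) [Module.Finite K W] :
    Module.finrank K W ≤ ℓ + 1 := by
  by_contra hlt
  push Not at hlt
  let b := Module.finBasis K W
  have hsub : ∀ f : Fin (ℓ+1) → Fin (Module.finrank K W), ∃ κ : K, ∀ c : Fin (ℓ+1) → V,
      Matrix.det (fun i j => b.repr (π (c i)) (f j)) = (e (exteriorPower.ιMulti R (ℓ+1) c)) • κ := by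
    intro f
    let g : (V [⋀^Fin (ℓ+1)]→ₗ[R] K) :=
      (({ (Matrix.detRowAlternating (R := K) (n := Fin (ℓ+1))).toMultilinearMap.restrictScalars R with
          map_eq_zero_of_eq' := (Matrix.detRowAlternating (R := K) (n := Fin (ℓ+1))).map_eq_zero_of_eq' } :
            (Fin (ℓ+1) → K) [⋀^Fin (ℓ+1)]→ₗ[R] K)).compLinearMap
        (((LinearMap.funLeft K K f) ∘ₗ (Finsupp.lcoeFun) ∘ₗ b.repr.toLinearMap).restrictScalars R ∘ₗ π)
    refine ⟨exteriorPower.alternatingMapLinearEquiv g (e.symm 1), fun c => ?_⟩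
    rw [← map_smul, ← map_smul, smul_eq_mul, mul_one, e.symm_apply_apply, exteriorPower.alternatingMapLinearEquiv_apply_ιMulti]
    rfl
  have hv : ∀ i, ∃ v, π v = b i := fun i => hπ _
  choose v hv using hv
  let f1 : Fin (ℓ+1) → Fin (Module.finrank K W) := fun i => ⟨i, by omega⟩
  let f2 : Fin (ℓ+1) → Fin (Module.finrank K W) := fun i => ⟨i+1, by omega⟩
  have inj1 : Function.Injective f1 := fun i j h => by simpa [f1, Fin.ext_iff] using h
  have inj2 : Function.Injective f2 := fun i j h => by simpa [f2, Fin.ext_iff] using h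
  obtain ⟨κ1, h1⟩ := hsub f1
  obtain ⟨κ2, h2⟩ := hsub f2
  have key : ∀ f : Fin (ℓ+1) → Fin (Module.finrank K W), Function.Injective f → Matrix.det (fun i j => b.repr (π (v (f i))) (f j)) = 1 := by
    intro f hf
    convert Matrix.det_one (R := K) (n := Fin (ℓ+1)) using 1
    congr 1
    funext i j
    simp [hv, Finsupp.single_apply, Matrix.one_apply, hf.eq_iff]
  have a1 := h1 (fun i => v (f1 i))
  rw [key f1 inj1] at a1
  have a2 := h2 (fun i => v (f2 i))
  rw [key f2 inj2] at a2
  have a3 := h2 (fun i => v (f1 i))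
  rw [Matrix.det_eq_zero_of_row_eq_zero (A := fun i j => b.repr (π (v (f1 i))) (f2 j)) 0] at a3
  · rw [Algebra.smul_def] at a1 a2 a3
    rcases mul_eq_zero.1 a3.symm with h | h
    · rw [h] at a1; simp at a1
    · rw [h] at a2; simp at a2
  · intro j
    simp [hv, f1, f2]

lemma vanish_mod (m : Ideal R) {n : ℕ} {ι' : Type*} [Fintype ι'] (hn : Fintype.card ι' < n) (v : ι' → V)
    (hv : Submodule.span R (Set.range v) ⊔ m • (⊤ : Submodule R V) = ⊤) :
    (⊤ : Submodule R (⋀[R]^n V : Submodule R _)) ≤ m • ⊤ := by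
  have hs : Submodule.span R (Set.range v ∪ (m • (⊤ : Submodule R V) : Submodule R V)) = ⊤ := by
    rw [Submodule.span_union, Submodule.span_eq, hv]
  refine le_trans (ge_of_eq (exteriorPower.ιMulti_span_of_span R n V hs)) ?_
  rw [Submodule.span_le]
  rintro _ ⟨c, hc, rfl⟩
  by_cases h : ∀ i, c i ∈ Set.range v
  · choose f hf using h
    have : ¬ Function.Injective c := by
      intro hc
      have hfi : Function.Injective f := fun i j h => hc (by rw [← hf i, ← hf j, h])
      have := Fintype.card_le_of_injective f hfi
      simp at this; omega
    rw [AlternatingMap.map_eq_zero_of_not_injective _ _ this]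
    exact zero_mem _
  · push Not at h
    obtain ⟨i, hi⟩ := h
    have hci : c i ∈ m • (⊤ : Submodule R V) := by
      rcases hc (Set.mem_range_self i) with h | h
      · exact absurd h hi
      · exact h
    have : ∀ x ∈ m • (⊤ : Submodule R V), exteriorPower.ιMulti R n (Function.update c i x) ∈ m • (⊤ : Submodule R (⋀[R]^n V : Submodule R _)) := by
      intro x hx
      induction hx using Submodule.smul_induction_on' with
      | smul r hr y hy => rw [AlternatingMap.map_update_smul]; exact Submodule.smul_mem_smul hr trivial
      | add x _ y _ h1 h2 => rw [AlternatingMap.map_update_add]; exact add_mem h1 h2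
    simpa using this _ hci

lemma vanish_of_equiv [Module.Finite R V] {ℓ : ℕ} (e : (⋀[R]^(ℓ+1) V : Submodule R _) ≃ₗ[R] R) :
    ∀ x ∈ (⋀[R]^(ℓ+1+1) V : Submodule R _), x = 0 := by
  have key : Module.annihilator R (⋀[R]^(ℓ+1+1) V : Submodule R _) = ⊤ := by
    by_contra hne
    obtain ⟨m, hm, hle⟩ := Ideal.exists_le_maximal _ hne
    let _ : Field (R ⧸ m) := Ideal.Quotient.field m
    have hfin : Module.Finite (R ⧸ m) (V ⧸ (m • (⊤ : Submodule R V))) := Module.Finite.of_restrictScalars_finite R _ _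
    have hr := finrank_le e (R ⧸ m) (V ⧸ (m • (⊤ : Submodule R V))) (Submodule.mkQ _) (Submodule.mkQ_surjective _)
    let b := Module.finBasis (R ⧸ m) (V ⧸ (m • (⊤ : Submodule R V)))
    have hv : ∀ i, ∃ v, (m • (⊤ : Submodule R V)).mkQ v = b i := fun i => Submodule.mkQ_surjective _ _
    choose v hv using hv
    have hsp : Submodule.span R (Set.range v) ⊔ m • (⊤ : Submodule R V) = ⊤ := by
      have h1 : Submodule.span R (Set.range b) = ⊤ := by
        rw [← Submodule.restrictScalars_span R (R ⧸ m) Ideal.Quotient.mk_surjective, b.span_eq]; rfl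
      have h2 : Submodule.map (m • (⊤ : Submodule R V)).mkQ (Submodule.span R (Set.range v)) = ⊤ := by
        rw [Submodule.map_span, ← Set.range_comp, ← h1]
        congr 2; ext i; exact hv i
      have h3 := congrArg (Submodule.comap (m • (⊤ : Submodule R V)).mkQ) h2
      rw [Submodule.comap_map_mkQ, Submodule.comap_top] at h3
      rw [sup_comm]; exact h3
    have h5 := vanish_mod m (n := ℓ+1+1) (by simp; omega) v hsp
    obtain ⟨r, hr1, hr2⟩ := Submodule.exists_sub_one_mem_and_smul_eq_zero_of_fg_of_le_smul m _ Module.Finite.fg_top h5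
    have : r ∈ m := hle (by rw [Module.mem_annihilator]; exact fun x => hr2 x trivial)
    exact hm.ne_top ((Ideal.eq_top_iff_one _).2 (by simpa using sub_mem this hr1))
  intro x hx
  have : (1 : R) ∈ Module.annihilator R (⋀[R]^(ℓ+1+1) V : Submodule R _) := by rw [key]; trivial
  have := Module.mem_annihilator.1 this ⟨x, hx⟩
  simpa using this

/-- Cramer rule. -/
lemma cramer {ℓ : ℕ} (h0 : ∀ x ∈ (⋀[R]^(ℓ+1) V : Submodule R _), x = 0)
    (g : V [⋀^Fin ℓ]→ₗ[R] R) (c : Fin ℓ → V) (v : V) :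
    g c • v = ∑ i, g (Function.update c i v) • c i := by
  have hz : ∀ (T : V [⋀^Fin (ℓ+1)]→ₗ[R] V), T = 0 := by
    intro T
    ext w
    rw [← exteriorPower.alternatingMapLinearEquiv_apply_ιMulti]
    have : exteriorPower.ιMulti R (ℓ+1) w = 0 := Subtype.ext (h0 _ (exteriorPower.ιMulti R (ℓ+1) w).2)
    rw [this]; simp
  let f : V →ₗ[R] V [⋀^Fin ℓ]→ₗ[R] V :=
    { toFun := fun y => (LinearMap.toSpanSingleton R V y).compAlternatingMap g
      map_add' := fun y z => by ext; simp
      map_smul' := fun y z => by ext; simp only [LinearMap.compAlternatingMap_apply, LinearMap.toSpanSingleton_apply, RingHom.id_apply, AlternatingMap.smul_apply]; exact smul_comm _ _ _ }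
  have h1 := congrArg (fun T => T (Fin.cons v c)) (hz (AlternatingMap.alternatizeUncurryFin f))
  simp only [AlternatingMap.alternatizeUncurryFin_apply, AlternatingMap.zero_apply] at h1
  rw [Fin.sum_univ_succ] at h1
  simp only [f, Fin.val_zero, pow_zero, one_smul, Fin.cons_zero, LinearMap.coe_mk, AddHom.coe_mk, LinearMap.compAlternatingMap_apply, Fin.removeNth_zero, Fin.tail_cons, Fin.cons_succ, LinearMap.toSpanSingleton_apply] at h1
  rw [eq_neg_of_add_eq_zero_left h1, ← Finset.sum_neg_distrib]
  refine Finset.sum_congr rfl fun i _ => ?_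
  have h2 : g (Fin.removeNth i.succ (Fin.cons v c : Fin (ℓ+1) → V)) = (-1 : ℤ)^(i : ℕ) • g (Function.update c i v) := by
    cases ℓ with
    | zero => exact i.elim0
    | succ n =>
    have h3 : Fin.removeNth i.succ (Fin.cons v c : Fin (n+1+1) → V) = Fin.cons v (i.removeNth c) := by
      ext j
      refine Fin.cases ?_ (fun j => ?_) j
      · simp [Fin.removeNth]
      · simp [Fin.removeNth]
    have h4 : Function.update c i v = i.insertNth v (i.removeNth c) := by
      simp
    rw [h3, h4, AlternatingMap.map_insertNth, smul_smul, ← pow_add, Even.neg_one_pow ⟨_, rfl⟩, one_smul]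
    rfl
  rw [h2]
  rcases neg_one_pow_eq_or ℤ (i : ℕ) with h | h <;> simp [h, pow_succ]

end Gen
end PD

namespace PD
section Gen
open Polynomial

lemma derivation_nilp {k A : Type*} [Field k] [CharZero k] [CommRing A] [Algebra k A]
    (D : Derivation k A A) (x : A) : ∀ r m : ℕ, x ^ r * (D x) ^ m = 0 → IsNilpotent (D x) := by
  intro r
  induction r with
  | zero => intro m h; exact ⟨m, by simpa using h⟩
  | succ r ih =>
    intro m h
    refine ih (m+2) ?_
    have h1 : x ^ (r+1) * (D x) ^ (m+1) = 0 := by rw [pow_succ (D x), ← mul_assoc, h, zero_mul]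
    have h2 := congrArg D h1
    rw [D.leibniz, D.leibniz_pow, D.leibniz_pow, map_zero] at h2
    simp only [add_tsub_cancel_right, smul_eq_mul, nsmul_eq_mul] at h2
    have h3 : ((r+1 : ℕ) : A) * (x^r * (D x)^(m+2)) = 0 := by
      linear_combination h2 - ((m+1 : ℕ) : A) * D (D x) * h
    have h4 : IsUnit ((r+1 : ℕ) : A) := by
      have : ((r+1 : ℕ) : A) = algebraMap k A ((r+1 : ℕ) : k) := by simp
      rw [this]
      exact (IsUnit.mk0 _ (by exact_mod_cast Nat.succ_ne_zero r)).map _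
    exact (h4.mul_right_eq_zero).1 h3

lemma omega_zero {k A : Type*} [Field k] [CharZero k] [CommRing A] [Algebra k A]
    [Algebra.FiniteType k A] [Module.Projective A (Ω[A⁄k])] (hdim : ringKrullDim A = 0) (w : Ω[A⁄k]) :
    w = 0 := by
  have hK : Ring.KrullDimLE 0 A := by
    rw [Ring.KrullDimLE, Order.krullDimLE_iff, ← ringKrullDim, hdim]; simp
  have hfin : Module.Finite k A := (Module.finite_iff_krullDimLE_zero k A).2 hK
  have hdual : ∀ (φ : Ω[A⁄k] →ₗ[A] A) (v : Ω[A⁄k]), φ v ∈ nilradical A := by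
    intro φ v
    have hN : ∀ x : A, IsNilpotent x → IsNilpotent (φ (KaehlerDifferential.D k A x)) := by
      rintro x ⟨n, hn⟩
      exact derivation_nilp (φ.compDer (KaehlerDifferential.D k A)) x n 0 (by simpa using hn)
    have hv : v ∈ Submodule.span A (Set.range (KaehlerDifferential.D k A)) := by
      rw [KaehlerDifferential.span_range_derivation]; trivial
    induction hv using Submodule.span_induction with
    | zero => simp
    | add x y _ _ h1 h2 => rw [map_add]; exact add_mem h1 h2
    | smul a x _ h => rw [map_smul]; exact Ideal.mul_mem_left _ _ h
    | mem x hx =>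
      obtain ⟨a, rfl⟩ := hx
      have haInt : IsIntegral k a := Algebra.IsIntegral.isIntegral a
      obtain ⟨g, n, hg, -, hgn⟩ := exists_squarefree_dvd_pow_of_ne_zero (minpoly.ne_zero haInt)
      have hsep : g.Separable := PerfectField.separable_iff_squarefree.2 hg
      have hnil : IsNilpotent (aeval a g) := by
        refine ⟨n, ?_⟩
        rw [← map_pow]
        obtain ⟨r, hr⟩ := hgn
        rw [hr, map_mul, minpoly.aeval, zero_mul]
      obtain ⟨s, t, hst⟩ := hsep
      have h1 : aeval a s * aeval a g + aeval a t * aeval a (derivative g) = 1 := by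
        rw [← map_mul, ← map_mul, ← map_add, hst, map_one]
      have h2 := hN _ hnil
      rw [Derivation.map_aeval, map_smul, smul_eq_mul] at h2
      have h3 : φ (KaehlerDifferential.D k A a) = (aeval a s * φ (KaehlerDifferential.D k A a)) * aeval a g + aeval a t * (aeval a (derivative g) * φ (KaehlerDifferential.D k A a)) := by
        linear_combination (- φ (KaehlerDifferential.D k A a)) * h1
      rw [h3]
      exact add_mem (Ideal.mul_mem_left _ _ hnil) (Ideal.mul_mem_left _ _ h2)
  have htop : (⊤ : Submodule A (Ω[A⁄k])) ≤ nilradical A • ⊤ := by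
    intro v _
    obtain ⟨s, hs⟩ := (Module.projective_def (R := A) (P := Ω[A⁄k])).1 inferInstance
    have := hs v
    rw [Finsupp.linearCombination_apply] at this
    rw [← this]
    refine Submodule.sum_mem _ fun i _ => Submodule.smul_mem_smul ?_ trivial
    exact hdual (Finsupp.lapply i ∘ₗ s) v
  have : (⊤ : Submodule A (Ω[A⁄k])) = ⊥ := Submodule.eq_bot_of_le_smul_of_le_jacobson_bot (nilradical A) _ Module.Finite.fg_top htop (Ideal.radical_le_jacobson)
  have hw : w ∈ (⊤ : Submodule A (Ω[A⁄k])) := trivial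
  rw [this] at hw
  simpa using hw
end Gen

/-- vanishing of the `(ℓ+1)`-st exterior power of the differentials -/
lemma omega_vanish {k A : Type*} [Field k] [CharZero k] [CommRing A] [Algebra k A]
    [Algebra.FiniteType k A] [Module.Projective A (Ω[A⁄k])] {ℓ : ℕ} (hdim : ringKrullDim A = ℓ)
    (e : (⋀[A]^ℓ (Ω[A⁄k]) : Submodule A _) ≃ₗ[A] A) : ∀ x ∈ (⋀[A]^(ℓ+1) (Ω[A⁄k]) : Submodule A _), x = 0 := by
  cases ℓ with
  | succ n => exact vanish_of_equiv e
  | zero =>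
    intro x hx
    change x ∈ LinearMap.range (ExteriorAlgebra.ι A : Ω[A⁄k] →ₗ[A] ExteriorAlgebra A (Ω[A⁄k])) ^ (0+1) at hx
    rw [zero_add, pow_one] at hx
    obtain ⟨w, rfl⟩ := hx
    rw [omega_zero (by simpa using hdim) w, map_zero]
end PD

namespace PD
section Om
variable {k A : Type u} [Field k] [CommRing A] [Algebra k A]

lemma span_wedgeD (n : ℕ) : Submodule.span A (Set.range (wedgeD k A n)) = ⊤ := by
  have := exteriorPower.ιMulti_span_of_span A n (Ω[A⁄k]) (KaehlerDifferential.span_range_derivation k A)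
  refine top_le_iff.1 (le_trans (ge_of_eq this) (Submodule.span_mono ?_))
  rintro _ ⟨c, hc, rfl⟩
  choose a ha using fun i => hc (Set.mem_range_self i)
  refine ⟨a, Subtype.ext ?_⟩
  simp [wedgeD, ha]

lemma wedgeD_eq (n : ℕ) (v : Fin n → A) : wedgeD k A n v = exteriorPower.ιMulti A n (fun i => KaehlerDifferential.D k A (v i)) := rfl

lemma exists_dual {ℓ : ℕ} (h0 : ∀ x ∈ (⋀[A]^(ℓ+1) (Ω[A⁄k]) : Submodule A _), x = 0)
    (e : (⋀[A]^ℓ (Ω[A⁄k]) : Submodule A _) ≃ₗ[A] A) :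
    ∃ (N : ℕ) (y : Fin N → A) (φ : Fin N → Module.Dual A (Ω[A⁄k])),
      (∀ v, ∑ j, φ j v • KaehlerDifferential.D k A (y j) = v) ∧
      ∑ j, φ j (KaehlerDifferential.D k A (y j)) = (ℓ : A) := by
  have h1 : e.symm 1 ∈ Submodule.span A (Set.range (wedgeD k A ℓ)) := by rw [span_wedgeD]; trivial
  obtain ⟨c, hc⟩ := (Finsupp.mem_span_range_iff_exists_finsupp).1 h1
  have hc' : ∑ s : c.support, c s * e (wedgeD k A ℓ s) = 1 := by
    have := congrArg e hc
    rw [e.apply_symm_apply, Finsupp.sum, map_sum, ← Finset.sum_coe_sort] at this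
    simpa using this
  let g : (Ω[A⁄k]) [⋀^Fin ℓ]→ₗ[A] A := e.toLinearMap.compAlternatingMap (exteriorPower.ιMulti A ℓ)
  let E := Fintype.equivFin (c.support × Fin ℓ)
  let φ' : c.support × Fin ℓ → Module.Dual A (Ω[A⁄k]) := fun s =>
    c s.1 • g.toMultilinearMap.toLinearMap (fun i => KaehlerDifferential.D k A (s.1.1 i)) s.2
  refine ⟨_, fun j => (E.symm j).1.1 (E.symm j).2, fun j => φ' (E.symm j), fun v => ?_, ?_⟩
  · rw [Equiv.sum_comp E.symm (fun s => φ' s v • KaehlerDifferential.D k A (s.1.1 s.2)), Fintype.sum_prod_type]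
    have h2 : ∀ s : c.support, ∑ i, φ' (s, i) v • KaehlerDifferential.D k A (s.1 i) = (c s * e (wedgeD k A ℓ s)) • v := by
      intro s
      have := cramer h0 g (fun i => KaehlerDifferential.D k A (s.1 i)) v
      rw [mul_smul]
      change _ = c s • (g (fun i => KaehlerDifferential.D k A (s.1 i)) • v)
      rw [this, Finset.smul_sum]
      refine Finset.sum_congr rfl fun i _ => ?_
      rw [← mul_smul]; rfl
    simp_rw [h2]
    rw [← Finset.sum_smul, hc', one_smul]
  · rw [Equiv.sum_comp E.symm (fun s => φ' s (KaehlerDifferential.D k A (s.1.1 s.2))), Fintype.sum_prod_type]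
    have h2 : ∀ s : c.support, ∀ i, φ' (s, i) (KaehlerDifferential.D k A (s.1 i)) = (c s * e (wedgeD k A ℓ s)) := by
      intro s i
      change c s * g (Function.update _ i _) = _
      rw [Function.update_eq_self_iff.2 rfl]; rfl
    simp only [h2, Finset.sum_const, Finset.card_univ, Fintype.card_fin]
    rw [← Finset.smul_sum, hc']; simp

variable {M : Type u} [AddCommGroup M] [Module k M] [Module A M] [IsScalarTower k A M]

lemma expand {N : ℕ} (y : Fin N → A) (φ : Fin N → Module.Dual A (Ω[A⁄k]))
    (hφ : ∀ v, ∑ j, φ j v • KaehlerDifferential.D k A (y j) = v) (p : ℕ) :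
    ∀ (f : (Fin p → A) → M) (_ : ∀ v i, ∃ D : Derivation k A M, ∀ a, f (Function.update v i a) = D a)
      (b : Fin p → A), f b = ∑ J : Fin p → Fin N, (∏ i, φ (J i) (KaehlerDifferential.D k A (b i))) • f (y ∘ J) := by
  induction p with
  | zero =>
    intro f _ b
    simp [Subsingleton.elim b (y ∘ (default : Fin 0 → Fin N))]
  | succ p ih =>
    intro f hf b
    have hD : ∀ (a : A) (c : Fin p → A), f (Fin.cons a c) = ∑ j, φ j (KaehlerDifferential.D k A a) • f (Fin.cons (y j) c) := by
      intro a c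
      obtain ⟨D, hD⟩ := hf (Fin.cons a c) 0
      simp only [Fin.update_cons_zero] at hD
      simp_rw [hD]
      conv_lhs => rw [← D.liftKaehlerDifferential_comp_D, ← hφ (KaehlerDifferential.D k A a)]
      simp
    obtain ⟨a, c, rfl⟩ : ∃ a c, b = Fin.cons a c := ⟨b 0, Fin.tail b, (Fin.cons_self_tail b).symm⟩
    rw [ih (fun c => f (Fin.cons a c)) ?_ c, ← (Fin.consEquiv (fun _ => Fin N)).sum_comp, Fintype.sum_prod_type, Finset.sum_comm]
    · refine Finset.sum_congr rfl fun J _ => ?_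
      rw [hD, Finset.smul_sum]
      refine Finset.sum_congr rfl fun j _ => ?_
      rw [smul_smul, Fin.prod_univ_succ]
      simp only [Fin.consEquiv, Equiv.coe_fn_mk, Fin.cons_zero, Fin.cons_succ]
      rw [mul_comm]
      congr 2
      ext i
      refine Fin.cases ?_ (fun i => ?_) i <;> simp
    · intro v i
      obtain ⟨D, hD⟩ := hf (Fin.cons a v) i.succ
      exact ⟨D, fun x => by rw [← hD, Fin.cons_update]⟩

lemma multiDer_der {p : ℕ} (F : multiDer k A M p) (v : Fin p → A) (i : Fin p) :
    ∃ D : Derivation k A M, ∀ a, (F : A [⋀^Fin p]→ₗ[k] M) (Function.update v i a) = D a :=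
  ⟨Derivation.mk' ((F : A [⋀^Fin p]→ₗ[k] M).toMultilinearMap.toLinearMap v i) (fun a b => F.2 v i a b), fun _ => rfl⟩

lemma exists_lift [CharZero k] {N : ℕ} (y : Fin N → A) (φ : Fin N → Module.Dual A (Ω[A⁄k]))
    (hφ : ∀ v, ∑ j, φ j v • KaehlerDifferential.D k A (y j) = v) {p : ℕ} (F : multiDer k A M p) :
    ∃ G : (⋀[A]^p (Ω[A⁄k]) : Submodule A _) →ₗ[A] M, ∀ b, G (wedgeD k A p b) = (F : A [⋀^Fin p]→ₗ[k] M) b := by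
  let mu : MultilinearMap A (fun _ : Fin p => Ω[A⁄k]) M := ∑ J : Fin p → Fin N,
    ((MultilinearMap.mkPiAlgebra A (Fin p) A).compLinearMap (fun i => φ (J i))).smulRight ((F : A [⋀^Fin p]→ₗ[k] M) (y ∘ J))
  have hmu : ∀ b : Fin p → A, mu (fun i => KaehlerDifferential.D k A (b i)) = (F : A [⋀^Fin p]→ₗ[k] M) b := by
    intro b
    rw [expand y φ hφ p (F : A [⋀^Fin p]→ₗ[k] M) (multiDer_der F) b]
    simp [mu]
  let c : A := algebraMap k A ((p.factorial : k)⁻¹)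
  refine ⟨c • exteriorPower.alternatingMapLinearEquiv (MultilinearMap.alternatization mu), fun b => ?_⟩
  rw [LinearMap.smul_apply, wedgeD_eq, exteriorPower.alternatingMapLinearEquiv_apply_ιMulti, MultilinearMap.alternatization_apply]
  have : ∀ σ : Equiv.Perm (Fin p), Equiv.Perm.sign σ • (MultilinearMap.domDomCongr σ mu) (fun i => KaehlerDifferential.D k A (b i)) = (F : A [⋀^Fin p]→ₗ[k] M) b := by
    intro σ
    rw [MultilinearMap.domDomCongr_apply, hmu (fun i => b (σ i))]
    change _ • (F : A [⋀^Fin p]→ₗ[k] M) (b ∘ σ) = _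
    rw [AlternatingMap.map_perm, smul_smul, Int.units_mul_self, one_smul]
  simp_rw [this]
  rw [Finset.sum_const, Finset.card_univ, Fintype.card_perm, Fintype.card_fin, ← Nat.cast_smul_eq_nsmul A, smul_smul]
  have : c * (p.factorial : A) = 1 := by
    have h : (p.factorial : A) = algebraMap k A (p.factorial : k) := by simp
    rw [h, ← map_mul, inv_mul_cancel₀ (by exact_mod_cast p.factorial_ne_zero), map_one]
  rw [this, one_smul]

/-- A-alternating maps on differentials restrict to multiderivations. -/
noncomputable def toMD {p : ℕ} (G : (Ω[A⁄k]) [⋀^Fin p]→ₗ[A] M) : multiDer k A M p :=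
  ⟨({ G.toMultilinearMap.restrictScalars k with
      map_eq_zero_of_eq' := G.map_eq_zero_of_eq' } : (Ω[A⁄k]) [⋀^Fin p]→ₗ[k] M).compLinearMap
        (KaehlerDifferential.D k A).toLinearMap, by
    have key : ∀ (v : Fin p → A) (i : Fin p) (a : A), (fun j => KaehlerDifferential.D k A (Function.update v i a j)) = Function.update (fun j => KaehlerDifferential.D k A (v j)) i (KaehlerDifferential.D k A a) := by
      intro v i a
      ext j
      by_cases h : j = i
      · subst h; simp
      · simp [h]
    intro v i a b
    change G (fun j => KaehlerDifferential.D k A (Function.update v i (a*b) j)) = a • G (fun j => KaehlerDifferential.D k A (Function.update v i b j)) + b • G (fun j => KaehlerDifferential.D k A (Function.update v i a j))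
    rw [key, key, key, Derivation.leibniz, AlternatingMap.map_update_add, AlternatingMap.map_update_smul, AlternatingMap.map_update_smul]⟩

lemma toMD_apply {p : ℕ} (G : (Ω[A⁄k]) [⋀^Fin p]→ₗ[A] M) (b : Fin p → A) :
    (toMD G : A [⋀^Fin p]→ₗ[k] M) b = G (fun i => KaehlerDifferential.D k A (b i)) := rfl

variable (M) in
/-- pairing of `M ⊗ ⋀^q` with the exterior algebra through a linear form. -/
noncomputable def pairB (q : ℕ) (et : ExteriorAlgebra A (Ω[A⁄k]) →ₗ[A] A) :
    ExteriorAlgebra A (Ω[A⁄k]) →ₗ[A] (M ⊗[A] (⋀[A]^q (Ω[A⁄k]) : Submodule A _)) →ₗ[A] M :=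
  LinearMap.mk₂ A (fun u τ => TensorProduct.rid A M
    (LinearMap.lTensor M (et ∘ₗ LinearMap.mulLeft A u ∘ₗ Submodule.subtype _) τ))
    (fun u u' τ => by
      rw [← map_add, ← LinearMap.add_apply, ← LinearMap.lTensor_add]
      congr 3; ext x; simp [add_mul])
    (fun c u τ => by
      rw [← map_smul, ← LinearMap.smul_apply, ← LinearMap.lTensor_smul]
      congr 3; ext x; simp)
    (fun u τ τ' => by rw [map_add, map_add])
    (fun c u τ => by rw [map_smul, map_smul])

lemma pairB_tmul (q : ℕ) (et : ExteriorAlgebra A (Ω[A⁄k]) →ₗ[A] A) (u : ExteriorAlgebra A (Ω[A⁄k])) (m : M)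
    (x : (⋀[A]^q (Ω[A⁄k]) : Submodule A _)) : pairB M q et u (m ⊗ₜ x) = et (u * x) • m := by
  simp [pairB]

variable (k A M) in
noncomputable def Psi (p q : ℕ) (et : ExteriorAlgebra A (Ω[A⁄k]) →ₗ[A] A) :
    (M ⊗[A] (⋀[A]^q (Ω[A⁄k]) : Submodule A _)) →ₗ[k] multiDer k A M p where
  toFun τ := toMD (((pairB M q et).flip τ).compAlternatingMap (ExteriorAlgebra.ιMulti A p))
  map_add' τ τ' := by
    apply Subtype.ext; ext b
    simp [toMD_apply]
  map_smul' c τ := by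
    apply Subtype.ext; ext b
    simp only [toMD_apply, RingHom.id_apply, SetLike.val_smul, AlternatingMap.smul_apply, LinearMap.compAlternatingMap_apply, LinearMap.flip_apply]
    rw [← algebraMap_smul A c τ, map_smul, algebraMap_smul]

lemma Psi_apply (p q : ℕ) (et : ExteriorAlgebra A (Ω[A⁄k]) →ₗ[A] A) (τ) (b : Fin p → A) :
    (Psi k A M p q et τ : A [⋀^Fin p]→ₗ[k] M) b = pairB M q et (wedgeD k A p b) τ := rfl

lemma Psi_bij [CharZero k] {ℓ : ℕ} (h0 : ∀ x ∈ (⋀[A]^(ℓ+1) (Ω[A⁄k]) : Submodule A _), x = 0)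
    (e : (⋀[A]^ℓ (Ω[A⁄k]) : Submodule A _) ≃ₗ[A] A) {p q : ℕ} (h : p + q = ℓ) :
    Function.Bijective (Psi k A M p q (etil e.toLinearMap)) := by
  obtain ⟨N, y, φ, hφ, ht⟩ := exists_dual h0 e
  have hinv : ∀ n : ℕ, n ≠ 0 → IsUnit (n : A) := by
    intro n hn
    have : (n : A) = algebraMap k A (n : k) := by simp
    rw [this]
    exact (IsUnit.mk0 _ (by exact_mod_cast hn)).map _
  constructor
  · rw [injective_iff_map_eq_zero]
    intro τ hτ
    obtain ⟨K, u, w, huw⟩ := keyK (fun j => KaehlerDifferential.D k A (y j)) φ e hφ ht hinv q p (by omega)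
    have h1 : ∀ v : (⋀[A]^p (Ω[A⁄k]) : Submodule A _), pairB M q (etil e.toLinearMap) v τ = 0 := by
      intro v
      have hv : v ∈ Submodule.span A (Set.range (wedgeD k A p)) := by rw [span_wedgeD]; trivial
      induction hv using Submodule.span_induction with
      | zero => simp
      | add x y _ _ h1 h2 => rw [Submodule.coe_add, map_add, LinearMap.add_apply, h1, h2, add_zero]
      | smul a x _ h => rw [Submodule.coe_smul, map_smul, LinearMap.smul_apply, h, smul_zero]
      | mem x hx =>
        obtain ⟨b, rfl⟩ := hx
        rw [← Psi_apply, hτ]; rfl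
    have h2 : ∀ τ : (M ⊗[A] (⋀[A]^q (Ω[A⁄k]) : Submodule A _)), τ = (-1 : A)^(q*p) • ∑ i, pairB M q (etil e.toLinearMap) (u i) τ ⊗ₜ[A] w i := by
      intro τ
      induction τ with
      | zero => simp
      | add a b h1 h2 =>
        conv_lhs => rw [h1, h2]
        simp only [map_add, TensorProduct.add_tmul, Finset.sum_add_distrib, smul_add]
      | tmul m x =>
        conv_lhs => rw [huw x]
        rw [TensorProduct.tmul_sum, Finset.smul_sum]
        refine Finset.sum_congr rfl fun i _ => ?_
        rw [pairB_tmul, mul_comm' x.2 (u i).2, map_smul, TensorProduct.smul_tmul, TensorProduct.tmul_smul, TensorProduct.tmul_smul, smul_assoc]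
    rw [h2 τ]
    simp [h1]
  · intro F
    obtain ⟨G, hG⟩ := exists_lift y φ hφ F
    obtain ⟨K, u, w, huw⟩ := keyK (fun j => KaehlerDifferential.D k A (y j)) φ e hφ ht hinv p q h
    refine ⟨∑ i, G (w i) ⊗ₜ[A] u i, ?_⟩
    apply Subtype.ext; ext b
    rw [Psi_apply, ← hG, huw (wedgeD k A p b), map_sum, map_sum]
    refine Finset.sum_congr rfl fun i _ => ?_
    rw [pairB_tmul, map_smul, ← huw]

lemma multiDer_zero [CharZero k] {ℓ : ℕ} (h0 : ∀ x ∈ (⋀[A]^(ℓ+1) (Ω[A⁄k]) : Submodule A _), x = 0)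
    (e : (⋀[A]^ℓ (Ω[A⁄k]) : Submodule A _) ≃ₗ[A] A) {p : ℕ} (h : ℓ < p) :
    Subsingleton (multiDer k A M p) := by
  obtain ⟨N, y, φ, hφ, ht⟩ := exists_dual h0 e
  refine subsingleton_of_forall_eq 0 fun F => ?_
  obtain ⟨G, hG⟩ := exists_lift y φ hφ F
  apply Subtype.ext; ext b
  rw [← hG]
  have : wedgeD k A p b = 0 := Subtype.ext (vanish_of_le h0 h _ (wedgeD k A p b).2)
  rw [this, map_zero]; rfl

lemma tensor_zero {ℓ : ℕ} (h0 : ∀ x ∈ (⋀[A]^(ℓ+1) (Ω[A⁄k]) : Submodule A _), x = 0) {q : ℕ} (h : ℓ < q) :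
    Subsingleton (M ⊗[A] (⋀[A]^q (Ω[A⁄k]) : Submodule A _)) := by
  have : Subsingleton (⋀[A]^q (Ω[A⁄k]) : Submodule A _) :=
    subsingleton_of_forall_eq 0 fun x => Subtype.ext (vanish_of_le h0 h _ x.2)
  infer_instance
end Om
end PD

namespace PD
section Comb

lemma update_append_left {A : Type*} {p q : ℕ} (b : Fin p → A) (a : Fin q → A) (j : Fin p) (z : A) :
    Function.update (Fin.append b a) (Fin.castAdd q j) z = Fin.append (Function.update b j z) a := by
  ext i
  refine Fin.addCases (fun i => ?_) (fun i => ?_) i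
  · by_cases h : i = j
    · subst h; simp
    · rw [Function.update_of_ne (by simpa using h)]; simp [h]
  · rw [Function.update_of_ne (by intro h; have := congrArg Fin.val h; simp at this; omega)]; simp

lemma update_append_right {A : Type*} {p q : ℕ} (b : Fin p → A) (a : Fin q → A) (j : Fin q) (z : A) :
    Function.update (Fin.append b a) (Fin.natAdd p j) z = Fin.append b (Function.update a j z) := by
  ext i
  refine Fin.addCases (fun i => ?_) (fun i => ?_) i
  · rw [Function.update_of_ne (by intro h; have := congrArg Fin.val h; simp at this; omega)]; simp
  · by_cases h : i = j
    · subst h; simp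
    · rw [Function.update_of_ne (by simpa using h)]; simp [h]

lemma ofFn_removeNth {A : Type*} {p : ℕ} (b : Fin (p+1) → A) (j : Fin (p+1)) :
    List.ofFn (j.removeNth b) = (List.ofFn b).eraseIdx j := by
  apply List.ext_getElem
  · simp [List.length_eraseIdx]; omega
  · intro i h1 h2
    rw [List.getElem_eraseIdx]
    simp only [List.getElem_ofFn, Fin.removeNth, Fin.succAbove, Fin.lt_def]
    split_ifs with h h' h' <;> first | rfl | (exfalso; simp at h h'; omega)

lemma ofFn_removeNth_left {A : Type*} {p q : ℕ} (b : Fin (p+1) → A) (a : Fin (q+1) → A) (i : Fin (p+1)) :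
    List.ofFn (Fin.removeNth (n := p+1+q) (α := fun _ => A) (Fin.castAdd (q+1) i) (Fin.append (m := p+1) (n := q+1) b a)) =
      List.ofFn (i.removeNth b) ++ List.ofFn a := by
  rw [ofFn_removeNth, ofFn_removeNth]
  have : List.ofFn (n := p+1+q+1) (Fin.append (m := p+1) (n := q+1) b a) = List.ofFn b ++ List.ofFn a := List.ofFn_fin_append b a
  rw [this, List.eraseIdx_append_of_lt_length]
  · rfl
  · simp; omega

lemma ofFn_removeNth_right {A : Type*} {p q : ℕ} (b : Fin p → A) (a : Fin (q+1) → A) (i : Fin (q+1)) :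
    List.ofFn (Fin.removeNth (n := p+q) (α := fun _ => A) (Fin.natAdd p i) (Fin.append (m := p) (n := q+1) b a)) =
      List.ofFn b ++ List.ofFn (i.removeNth a) := by
  rw [ofFn_removeNth, ofFn_removeNth]
  have : List.ofFn (n := p+q+1) (Fin.append (m := p) (n := q+1) b a) = List.ofFn b ++ List.ofFn a := List.ofFn_fin_append b a
  rw [this, List.eraseIdx_append_of_length_le]
  · simp
  · simp

lemma sum_comb {X : Type*} [AddCommGroup X] {B C : ℕ} (S : Fin (B+C) → Fin (B+C) → X) (T : Fin (B+C) → X)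
    (hS : ∀ x y, x ≠ y → S x y = S y x)
    (hT : ∑ x, T x - ∑ x, ∑ y, (if x < y then S x y else 0) = 0) :
    -(∑ i : Fin B, T (Fin.castAdd C i)) + ∑ i : Fin B, ∑ y, (if y ≠ Fin.castAdd C i then S (Fin.castAdd C i) y else 0)
      - ∑ i : Fin B, ∑ j : Fin B, (if i < j then S (Fin.castAdd C i) (Fin.castAdd C j) else 0)
    = ∑ i : Fin C, T (Fin.natAdd B i)
      - ∑ i : Fin C, ∑ j : Fin C, (if i < j then S (Fin.natAdd B i) (Fin.natAdd B j) else 0) := by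
  have h1 : ∑ i : Fin B, ∑ j : Fin B, (if j ≠ i then S (Fin.castAdd C i) (Fin.castAdd C j) else 0) =
      ∑ i : Fin B, ∑ j : Fin B, (if i < j then S (Fin.castAdd C i) (Fin.castAdd C j) else 0) +
      ∑ i : Fin B, ∑ j : Fin B, (if i < j then S (Fin.castAdd C i) (Fin.castAdd C j) else 0) := by
    nth_rewrite 3 [Finset.sum_comm]
    rw [← Finset.sum_add_distrib]
    refine Finset.sum_congr rfl fun i _ => ?_
    rw [← Finset.sum_add_distrib]
    refine Finset.sum_congr rfl fun j _ => ?_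
    rcases lt_trichotomy i j with h | h | h
    · rw [if_pos h.ne', if_pos h, if_neg h.not_gt, add_zero]
    · subst h; simp
    · rw [if_pos h.ne, if_neg h.not_gt, if_pos h, zero_add]
      exact hS _ _ (by simpa using h.ne')
  have h2 : ∀ (i : Fin B) (j : Fin C), Fin.castAdd C i < Fin.natAdd B j := by
    intro i j; rw [Fin.lt_def]; simp; omega
  have h3 : ∀ (i : Fin B) (j : Fin C), ¬ Fin.natAdd B j < Fin.castAdd C i := fun i j => (h2 i j).not_gt
  have h4 : ∀ (i : Fin B) (j : Fin C), Fin.natAdd B j ≠ Fin.castAdd C i := fun i j => (h2 i j).ne'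
  simp only [Fin.sum_univ_add, h2, h3, h4, if_true, if_false, Finset.sum_add_distrib, Finset.sum_const_zero,
    ne_eq, not_false_eq_true, Fin.castAdd_inj, Fin.natAdd_lt_natAdd_iff] at hT ⊢
  have h5 : ∀ i j : Fin B, Fin.castAdd C i < Fin.castAdd C j ↔ i < j := fun i j => Iff.rfl
  simp only [h5] at hT
  simp only [ne_eq] at h1
  rw [h1]
  refine sub_eq_zero.1 (neg_eq_zero.1 (Eq.trans ?_ hT))
  abel

variable {k A X : Type*} [CommRing k] [AddCommGroup A] [Module k A] [AddCommGroup X] [Module k X]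

lemma alt_update {n : ℕ} (G : A [⋀^Fin (n+1)]→ₗ[k] X) (v : Fin (n+2) → A) (i : Fin (n+2)) (j : Fin (n+1)) (z : A) :
    G (i.removeNth (Function.update v (i.succAbove j) z)) = (-1 : ℤ)^(j : ℕ) • G (Fin.cons z (j.removeNth (i.removeNth v))) := by
  rw [Fin.removeNth_update_succAbove, ← Fin.insertNth_removeNth, AlternatingMap.map_insertNth]
  rfl

lemma S_symm {N : ℕ} (G : A [⋀^Fin N]→ₗ[k] X) (br : A → A → A) (hbr : ∀ a b, br a b = - br b a)
    (c : Fin (N+1) → A) (x y : Fin (N+1)) (hxy : x ≠ y) :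
    (-1 : ℤ)^(x : ℕ) • G (x.removeNth (Function.update c y (br (c x) (c y)))) =
    (-1 : ℤ)^(y : ℕ) • G (y.removeNth (Function.update c x (br (c y) (c x)))) := by
  cases N with
  | zero => exact absurd (Fin.ext (by omega)) hxy
  | succ n =>
    obtain ⟨j, rfl⟩ := Fin.exists_succAbove_eq hxy.symm
    rw [alt_update]
    have hx : x = (x.succAbove j).succAbove (j.predAbove x) := (Fin.succAbove_succAbove_predAbove x j).symm
    have h2 := alt_update G c (x.succAbove j) (j.predAbove x) (br (c (x.succAbove j)) (c x))
    rw [← hx] at h2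
    rw [h2, Fin.removeNth_removeNth_eq_swap, hbr (c x)]
    have h3 : ∀ (z : A) (t : Fin n → A), G (Fin.cons (-z) t) = - G (Fin.cons z t) := by
      intro z t
      have := G.map_update_neg (Fin.cons z t) 0 z
      simpa using this
    rw [h3, smul_neg, smul_neg, smul_smul, smul_smul, ← pow_add, ← pow_add, Fin.neg_one_pow_succAbove_add_predAbove, ← neg_smul]

lemma update_form {n : ℕ} (G : A [⋀^Fin (n+1)]→ₗ[k] X) (br : A → A → A) (v : Fin (n+2) → A) :
    (∑ i : Fin (n + 2), ∑ j : Fin (n + 1), if (i : ℕ) ≤ (j : ℕ) then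
              ((-1 : ℤ) ^ ((i : ℕ) + (j : ℕ) + 1)) •
                G (Fin.cons (br (v i) (i.removeNth v j)) (j.removeNth (i.removeNth v)))
            else 0) = 
    - ∑ i : Fin (n+2), ∑ j : Fin (n+2), if i < j then (-1 : ℤ)^(i : ℕ) • G (i.removeNth (Function.update v j (br (v i) (v j)))) else 0 := by
  rw [← Finset.sum_neg_distrib]
  refine Finset.sum_congr rfl fun i _ => ?_
  rw [Fin.sum_univ_succAbove _ i, if_neg (lt_irrefl _), zero_add, ← Finset.sum_neg_distrib]
  refine Finset.sum_congr rfl fun j _ => ?_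
  have : i < i.succAbove j ↔ (i : ℕ) ≤ (j : ℕ) := by
    rw [Fin.lt_succAbove_iff_le_castSucc, Fin.le_def]; rfl
  simp only [this]
  split_ifs
  · rw [alt_update, smul_smul, ← pow_add, ← neg_smul]
    congr 1
    rw [pow_succ]; simp
  · simp
end Comb
end PD

namespace PD
section Chain
variable {k A : Type u} [Field k] [CommRing A] [Algebra k A]
variable {M : Type u} [AddCommGroup M] [Module k M] [Module A M] [IsScalarTower k A M]

lemma wedgeD_ofFn {n n' : ℕ} (v : Fin n → A) (v' : Fin n' → A) (h : List.ofFn v = List.ofFn v') :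
    (wedgeD k A n v : ExteriorAlgebra A (Ω[A⁄k])) = wedgeD k A n' v' := by
  have : ∀ {n : ℕ} (v : Fin n → A), (wedgeD k A n v : ExteriorAlgebra A (Ω[A⁄k])) =
      ((List.ofFn v).map (fun a => ExteriorAlgebra.ι A (KaehlerDifferential.D k A a))).prod := by
    intro n v
    rw [List.map_ofFn]
    exact ExteriorAlgebra.ιMulti_apply _
  rw [this, this, h]

lemma wedgeD_mul {p q : ℕ} (b : Fin p → A) (a : Fin q → A) :
    (wedgeD k A p b : ExteriorAlgebra A (Ω[A⁄k])) * wedgeD k A q a = wedgeD k A (p+q) (Fin.append b a) := by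
  change ExteriorAlgebra.ιMulti _ _ _ * ExteriorAlgebra.ιMulti _ _ _ = ExteriorAlgebra.ιMulti _ _ _
  rw [ExteriorAlgebra.ιMulti_mul_ιMulti]
  congr 1
  ext i
  refine Fin.addCases (fun i => ?_) (fun i => ?_) i <;> simp

lemma mul_left_wedge {p q : ℕ} (b : Fin (p+1) → A) (a : Fin (q+1) → A) (i : Fin (p+1)) :
    (wedgeD k A p (i.removeNth b) : ExteriorAlgebra A (Ω[A⁄k])) * wedgeD k A (q+1) a =
    wedgeD k A (p+1+q) (Fin.removeNth (n := p+1+q) (α := fun _ => A) (Fin.castAdd (q+1) i) (Fin.append (m := p+1) (n := q+1) b a)) := by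
  rw [wedgeD_mul]
  refine wedgeD_ofFn _ _ ?_
  rw [ofFn_removeNth_left, List.ofFn_fin_append]

lemma mul_right_wedge {p q : ℕ} (b : Fin p → A) (a : Fin (q+1) → A) (i : Fin (q+1)) :
    (wedgeD k A p b : ExteriorAlgebra A (Ω[A⁄k])) * wedgeD k A q (i.removeNth a) =
    wedgeD k A (p+q) (Fin.removeNth (n := p+q) (α := fun _ => A) (Fin.natAdd p i) (Fin.append (m := p) (n := q+1) b a)) := by
  rw [wedgeD_mul]
  refine wedgeD_ofFn _ _ ?_
  rw [ofFn_removeNth_right, List.ofFn_fin_append]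

/-- `v ↦ m ⊗ dv` as an alternating map -/
noncomputable def tw (n : ℕ) (m : M) : A [⋀^Fin n]→ₗ[k] (M ⊗[A] (⋀[A]^n (Ω[A⁄k]) : Submodule A _)) :=
  (toMD (k := k) ((TensorProduct.mk A M _ m).compAlternatingMap (exteriorPower.ιMulti A n (M := Ω[A⁄k])))).1

lemma tw_apply (n : ℕ) (m : M) (v : Fin n → A) : tw (k := k) n m v = m ⊗ₜ wedgeD k A n v := rfl

/-- `v ↦ e(dv)` as an alternating map -/
noncomputable def eAlt {n : ℕ} (e : (⋀[A]^n (Ω[A⁄k]) : Submodule A _) →ₗ[A] A) : A [⋀^Fin n]→ₗ[k] A :=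
  (toMD (k := k) (e.compAlternatingMap (exteriorPower.ιMulti A n (M := Ω[A⁄k])))).1

lemma eAlt_apply {n : ℕ} (e : (⋀[A]^n (Ω[A⁄k]) : Submodule A _) →ₗ[A] A) (v : Fin n → A) :
    eAlt e v = e (wedgeD k A n v) := rfl

variable {P : PoissonAlgebra k A}

lemma d_form {R : RightPMod P M} (D : PHomologyData P M R) (n : ℕ) (m : M) (v : Fin (n+1) → A) :
    D.d n (m ⊗ₜ wedgeD k A (n+1) v) =
      (∑ i : Fin (n + 1), ((-1 : ℤ) ^ (i : ℕ)) • ((R.br m (v i)) ⊗ₜ[A] wedgeD k A n (i.removeNth v)))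
      - ∑ i : Fin (n+1), ∑ j : Fin (n+1), if i < j then (-1 : ℤ)^(i : ℕ) • (m ⊗ₜ[A] wedgeD k A n (i.removeNth (Function.update v j (P.br (v i) (v j))))) else 0 := by
  cases n with
  | zero =>
    rw [D.d_zero]
    simp
  | succ q =>
    rw [D.d_succ, sub_eq_add_neg]
    congr 1
    exact update_form (tw (k := k) (q+1) m) (fun a b => P.br a b) v

lemma δ_form {R : RightPMod P M} (D : PCohomologyData P M R) (n : ℕ) (f : multiDer k A M n) (v : Fin (n+1) → A) :
    (D.δ n f : A [⋀^Fin (n+1)]→ₗ[k] M) v =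
      (∑ i : Fin (n + 1), ((-1 : ℤ) ^ ((i : ℕ)+1)) • R.br ((f : A [⋀^Fin n]→ₗ[k] M) (i.removeNth v)) (v i))
      - ∑ i : Fin (n+1), ∑ j : Fin (n+1), if i < j then (-1 : ℤ)^(i : ℕ) • (f : A [⋀^Fin n]→ₗ[k] M) (i.removeNth (Function.update v j (P.br (v i) (v j)))) else 0 := by
  cases n with
  | zero =>
    rw [D.δ_zero]
    simp
  | succ q =>
    rw [D.δ_succ, sub_eq_add_neg]
    congr 1
    exact update_form (f : A [⋀^Fin (q+1)]→ₗ[k] M) (fun a b => P.br a b) v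

lemma modular {N : ℕ} 
    (Lω : LeftPMod P (⋀[A]^N (Ω[A⁄k]) : Submodule A _))
    (hLω : ∀ (a f : A) (v : Fin N → A),
      Lω.br a (f • wedgeD k A N v)
        = (P.br a f) • wedgeD k A N v
          + f • ∑ i : Fin N, wedgeD k A N (Function.update v i (P.br a (v i))))
    (δ : PoissonDerivation P)
    (e : (⋀[A]^N (Ω[A⁄k]) : Submodule A _) ≃ₗ[A] A)
    (hmod : ∀ (a : A) (x : (⋀[A]^N (Ω[A⁄k]) : Submodule A _)),
      e (Lω.br a x) = P.br a (e x) + δ.d a * e x)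
    (c : Fin (N+1) → A) (x : Fin (N+1)) :
    P.br (e (wedgeD k A N (x.removeNth c))) (c x) = δ.d (c x) * e (wedgeD k A N (x.removeNth c))
      - ∑ y, if y ≠ x then e (wedgeD k A N (x.removeNth (Function.update c y (P.br (c x) (c y))))) else 0 := by
  have h1 := hmod (c x) (wedgeD k A N (x.removeNth c))
  have h2 := hLω (c x) 1 (x.removeNth c)
  have h3 : P.br (c x) 1 = 0 := by
    rw [P.skew]
    have := P.leibniz 1 1 (c x)
    simp at this
    simp [this]
  rw [h3, zero_smul, zero_add, one_smul, one_smul] at h2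
  rw [h2, map_sum] at h1
  rw [P.skew, eq_sub_of_add_eq h1.symm, neg_sub]
  congr 1
  rw [Fin.sum_univ_succAbove _ x]
  simp only [ne_eq, not_true_eq_false, if_false, zero_add, Fin.succAbove_ne, not_false_eq_true, if_true]
  refine Finset.sum_congr rfl fun j _ => ?_
  rw [Fin.removeNth_update_succAbove]
  rfl

end Chain
end PD

namespace PD
section Chain
variable {k A : Type u} [Field k] [CommRing A] [Algebra k A]
variable {M : Type u} [AddCommGroup M] [Module k M] [Module A M] [IsScalarTower k A M]
variable {P : PoissonAlgebra k A}

lemma chain_gen {p q : ℕ} 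
    (h0 : ∀ x ∈ (⋀[A]^(p+1+q+1) (Ω[A⁄k]) : Submodule A _), x = 0)
    (Lω : LeftPMod P (⋀[A]^(p+1+q) (Ω[A⁄k]) : Submodule A _))
    (hLω : ∀ (a f : A) (v : Fin (p+1+q) → A),
      Lω.br a (f • wedgeD k A (p+1+q) v)
        = (P.br a f) • wedgeD k A (p+1+q) v
          + f • ∑ i : Fin (p+1+q), wedgeD k A (p+1+q) (Function.update v i (P.br a (v i))))
    (δ : PoissonDerivation P)
    (e : (⋀[A]^(p+1+q) (Ω[A⁄k]) : Submodule A _) ≃ₗ[A] A)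
    (hmod : ∀ (a : A) (x : (⋀[A]^(p+1+q) (Ω[A⁄k]) : Submodule A _)),
      e (Lω.br a x) = P.br a (e x) + δ.d a * e x)
    (R : RightPMod P M)
    (Rδ : RightPMod P M) (hRδ : ∀ m a, Rδ.br m a = R.br m a + δ.d a • m)
    (DC : PCohomologyData P M R)
    (Dδ : PHomologyData P M Rδ) (m : M) (a : Fin (q+1) → A) (b : Fin (p+1) → A) :
    (DC.δ p (Psi k A M p (q+1) (etil e.toLinearMap) (m ⊗ₜ wedgeD k A (q+1) a)) : A [⋀^Fin (p+1)]→ₗ[k] M) b =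
      (-1 : ℤ)^(p+1) • (Psi k A M (p+1) q (etil e.toLinearMap) (Dδ.d q (m ⊗ₜ wedgeD k A (q+1) a)) : A [⋀^Fin (p+1)]→ₗ[k] M) b := by
  let c : Fin (p+1+q+1) → A := Fin.append (m := p+1) (n := q+1) b a
  have hcb : ∀ i, c (Fin.castAdd (q+1) i) = b i := fun i => Fin.append_left b a i
  have hca : ∀ i, c (Fin.natAdd (p+1) i) = a i := fun i => Fin.append_right b a i
  let E : Fin (p+1+q+1) → A := fun x => e (wedgeD k A (p+1+q) (x.removeNth c))
  let W : Fin (p+1+q+1) → Fin (p+1+q+1) → A := fun x y =>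
    e (wedgeD k A (p+1+q) (x.removeNth (Function.update c y (P.br (c x) (c y)))))
  let S : Fin (p+1+(q+1)) → Fin (p+1+(q+1)) → M := fun x y => ((-1 : ℤ)^(x : ℕ) • W x y) • m
  let T : Fin (p+1+(q+1)) → M := fun x => ((-1 : ℤ)^(x : ℕ)) • E x • Rδ.br m (c x)
  have hS : ∀ x y, x ≠ y → S x y = S y x := by
    intro x y hxy
    change (_ : A) • m = (_ : A) • m
    congr 1
    exact S_symm (eAlt e.toLinearMap) (fun a b => P.br a b) P.skew c x y hxy
  have hT : ∑ x, T x - ∑ x, ∑ y, (if x < y then S x y else 0) = 0 := by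
    have := tensor_zero (M := M) h0 (q := p+1+q+1) (by omega)
    have h1 := d_form Dδ (p+1+q) m c
    rw [Subsingleton.elim (m ⊗ₜ wedgeD k A (p+1+q+1) c) 0, map_zero] at h1
    have h2 := congrArg (pairB M (p+1+q) (etil e.toLinearMap) 1) h1
    have h3 : ∀ (m' : M) v, pairB M (p+1+q) (etil e.toLinearMap) 1 (m' ⊗ₜ wedgeD k A (p+1+q) v) = e (wedgeD k A (p+1+q) v) • m' := by
      intro m' v
      rw [pairB_tmul, one_mul, etil_coe]; rfl
    simp only [map_zero, map_sub, map_sum, map_zsmul, h3, apply_ite (pairB M (p+1+q) (etil e.toLinearMap) 1)] at h2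
    refine Eq.trans ?_ h2.symm
    congr 1
    refine Finset.sum_congr rfl fun x _ => Finset.sum_congr rfl fun y _ => ?_
    congr 1
    exact smul_assoc _ _ _
  have key := sum_comb S T hS hT
  have hL : ∀ (i : Fin (p+1)) (b' : Fin (p+1) → A), (Psi k A M p (q+1) (etil e.toLinearMap) (m ⊗ₜ wedgeD k A (q+1) a) : A [⋀^Fin p]→ₗ[k] M) (i.removeNth b') =
      e (wedgeD k A (p+1+q) (Fin.removeNth (n := p+1+q) (α := fun _ => A) (Fin.castAdd (q+1) i) (Fin.append (m := p+1) (n := q+1) b' a))) • m := by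
    intro i b'
    rw [Psi_apply, pairB_tmul, mul_left_wedge, etil_coe]; rfl
  have hRr : ∀ (i : Fin (q+1)) (a' : Fin (q+1) → A) (m' : M), pairB M q (etil e.toLinearMap) (wedgeD k A (p+1) b) (m' ⊗ₜ wedgeD k A q (i.removeNth a')) =
      e (wedgeD k A (p+1+q) (Fin.removeNth (n := p+1+q) (α := fun _ => A) (Fin.natAdd (p+1) i) (Fin.append (m := p+1) (n := q+1) b a'))) • m' := by
    intro i a' m'
    rw [pairB_tmul, mul_right_wedge, etil_coe]; rfl
  rw [δ_form, Psi_apply, d_form]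
  simp only [map_sub, map_sum, map_zsmul, hL, hRr, apply_ite (pairB M q (etil e.toLinearMap) (wedgeD k A (p+1) b)), map_zero]
  have hsgn : ((-1 : ℤ)^(p+1)) * (-1)^(p+1) = 1 := by rw [← pow_add, ← two_mul, pow_mul]; simp
  refine Eq.trans ?_ (key.trans ?_)
  · congr 1
    · rw [← Finset.sum_neg_distrib, ← Finset.sum_add_distrib]
      refine Finset.sum_congr rfl fun i _ => ?_
      have hm := modular Lω hLω δ e hmod c (Fin.castAdd (q+1) i)
      change _ • R.br (E (Fin.castAdd (q+1) i) • m) (b i) = _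
      rw [R.act, ← hcb]
      have hm' : P.br (E (Fin.castAdd (q+1) i)) (c (Fin.castAdd (q+1) i)) = δ.d (c (Fin.castAdd (q+1) i)) * E (Fin.castAdd (q+1) i) - ∑ y, if y ≠ Fin.castAdd (q+1) i then W (Fin.castAdd (q+1) i) y else 0 := hm
      rw [hm']
      have h4 : ∑ y, (if y ≠ Fin.castAdd (q+1) i then S (Fin.castAdd (q+1) i) y else 0) = (-1 : ℤ)^(i : ℕ) • (∑ y, if y ≠ Fin.castAdd (q+1) i then W (Fin.castAdd (q+1) i) y else 0) • m := by
        rw [Finset.sum_smul, Finset.smul_sum]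
        refine Finset.sum_congr rfl fun y _ => ?_
        split_ifs
        · exact smul_assoc _ _ _
        · simp
      rw [h4]
      change _ = -((-1 : ℤ)^(i : ℕ) • E (Fin.castAdd (q+1) i) • Rδ.br m (c (Fin.castAdd (q+1) i))) + _
      rw [hRδ, pow_succ]
      generalize (∑ y, if y ≠ Fin.castAdd (q+1) i then W (Fin.castAdd (q+1) i) y else 0) = w
      generalize E (Fin.castAdd (q+1) i) = e'
      generalize R.br m (c (Fin.castAdd (q + 1) i)) = r
      generalize δ.d (c (Fin.castAdd (q + 1) i)) = t
      rw [mul_neg, mul_one, neg_smul, ← smul_neg, ← smul_neg, ← smul_add]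
      congr 1
      module
    · refine Finset.sum_congr rfl fun i _ => Finset.sum_congr rfl fun j _ => ?_
      congr 1
      change _ = ((-1 : ℤ)^(i : ℕ) • e (wedgeD k A (p+1+q) (Fin.removeNth (n := p+1+q) (α := fun _ => A) (Fin.castAdd (q+1) i) (Function.update c (Fin.castAdd (q+1) j) (P.br (c (Fin.castAdd (q+1) i)) (c (Fin.castAdd (q+1) j))))))) • m
      rw [hcb, hcb, smul_assoc, ← update_append_left]
  · rw [smul_sub, Finset.smul_sum, Finset.smul_sum]
    congr 1
    · refine Finset.sum_congr rfl fun i _ => ?_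
      change (-1 : ℤ)^(p+1+i) • E (Fin.natAdd (p+1) i) • Rδ.br m (c (Fin.natAdd (p+1) i)) = _
      rw [hca, smul_smul, ← pow_add]
    · refine Finset.sum_congr rfl fun i _ => ?_
      rw [Finset.smul_sum]
      refine Finset.sum_congr rfl fun j _ => ?_
      rw [smul_ite, smul_zero]
      congr 1
      change ((-1 : ℤ)^(p+1+i) • e (wedgeD k A (p+1+q) (Fin.removeNth (n := p+1+q) (α := fun _ => A) (Fin.natAdd (p+1) i) (Function.update c (Fin.natAdd (p+1) j) (P.br (c (Fin.natAdd (p+1) i)) (c (Fin.natAdd (p+1) j))))))) • m = _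
      rw [hca, hca, smul_assoc, ← update_append_right, smul_smul, ← pow_add]

lemma chain {ℓ p q : ℕ} (h : p + (q+1) = ℓ)
    (h0 : ∀ x ∈ (⋀[A]^(ℓ+1) (Ω[A⁄k]) : Submodule A _), x = 0)
    (Lω : LeftPMod P (⋀[A]^ℓ (Ω[A⁄k]) : Submodule A _))
    (hLω : ∀ (a f : A) (v : Fin ℓ → A),
      Lω.br a (f • wedgeD k A ℓ v)
        = (P.br a f) • wedgeD k A ℓ v
          + f • ∑ i : Fin ℓ, wedgeD k A ℓ (Function.update v i (P.br a (v i))))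
    (δ : PoissonDerivation P)
    (e : (⋀[A]^ℓ (Ω[A⁄k]) : Submodule A _) ≃ₗ[A] A)
    (hmod : ∀ (a : A) (x : (⋀[A]^ℓ (Ω[A⁄k]) : Submodule A _)),
      e (Lω.br a x) = P.br a (e x) + δ.d a * e x)
    (R : RightPMod P M)
    (Rδ : RightPMod P M) (hRδ : ∀ m a, Rδ.br m a = R.br m a + δ.d a • m)
    (DC : PCohomologyData P M R)
    (Dδ : PHomologyData P M Rδ) (τ : M ⊗[A] (⋀[A]^(q+1) (Ω[A⁄k]) : Submodule A _)) :
    DC.δ p (Psi k A M p (q+1) (etil e.toLinearMap) τ) =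
      (-1 : ℤ)^(p+1) • Psi k A M (p+1) q (etil e.toLinearMap) (Dδ.d q τ) := by
  obtain rfl : p + 1 + q = ℓ := by omega
  induction τ with
  | zero => simp
  | add x y hx hy => simp only [map_add, hx, hy, smul_add]
  | tmul m w =>
    have hv : w ∈ Submodule.span A (Set.range (wedgeD k A (q+1))) := by rw [span_wedgeD]; trivial
    induction hv using Submodule.span_induction generalizing m with
    | zero => simp
    | add x y _ _ h1 h2 => simp only [TensorProduct.tmul_add, map_add, h1, h2, smul_add]
    | smul f x _ h => rw [TensorProduct.tmul_smul, TensorProduct.smul_tmul', h]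
    | mem x hx =>
      obtain ⟨a, rfl⟩ := hx
      apply Subtype.ext; ext b
      exact chain_gen h0 Lω hLω δ e hmod R Rδ hRδ DC Dδ m a b
end Chain
end PD

namespace PD
section Fin
variable {k : Type*} [Field k] 

lemma quotEquiv {X Y : Type*} [AddCommGroup X] [Module k X] [AddCommGroup Y] [Module k Y] (ψ : X ≃ₗ[k] Y)
    (K B : Submodule k X) (K' B' : Submodule k Y) (hK : ∀ x, x ∈ K ↔ ψ x ∈ K') (hB : ∀ x, x ∈ B ↔ ψ x ∈ B') :
    Nonempty ((K ⧸ B.comap K.subtype) ≃ₗ[k] (K' ⧸ B'.comap K'.subtype)) := by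
  have h : K.map (ψ : X →ₗ[k] Y) = K' := by
    ext y
    rw [Submodule.mem_map_equiv, hK, ψ.apply_symm_apply]
  refine ⟨Submodule.Quotient.equiv _ _ (ψ.ofSubmodules K K' h) ?_⟩
  ext y
  rw [Submodule.mem_map_equiv]
  simp only [Submodule.mem_comap, Submodule.subtype_apply, hB]
  have : ψ ((ψ.ofSubmodules K K' h).symm y) = y := by simp
  rw [this]

lemma topQuot {X : Type*} [AddCommGroup X] [Module k X] (B Z : Submodule k X) (hZ : Z = ⊤) :
    Nonempty ((X ⧸ B) ≃ₗ[k] (Z ⧸ B.comap Z.subtype)) := by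
  subst hZ
  refine ⟨Submodule.Quotient.equiv _ _ Submodule.topEquiv.symm ?_⟩
  ext y
  rw [Submodule.mem_map_equiv]; rfl

end Fin
section Main
variable {k A : Type u} [Field k] [CommRing A] [Algebra k A]
variable {M : Type u} [AddCommGroup M] [Module k M] [Module A M] [IsScalarTower k A M]
variable {P : PoissonAlgebra k A} {R : RightPMod P M}

/-- cycles -/
noncomputable def Zh (D : PHomologyData P M R) : ∀ n, Submodule k (M ⊗[A] (⋀[A]^n (Ω[A⁄k]) : Submodule A _))
  | 0 => ⊤
  | n+1 => LinearMap.ker (D.d n)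

/-- coboundaries -/
noncomputable def Bc (D : PCohomologyData P M R) : ∀ n, Submodule k (multiDer k A M n)
  | 0 => ⊥
  | n+1 => LinearMap.range (D.δ n)

lemma hom_equiv (D : PHomologyData P M R) (n : ℕ) :
    Nonempty (D.homology n ≃ₗ[k] (Zh D n ⧸ (LinearMap.range (D.d n)).comap (Zh D n).subtype)) := by
  cases n with
  | zero =>
    exact topQuot (LinearMap.range (D.d 0)) (Zh D 0) rfl
  | succ n => exact ⟨LinearEquiv.refl k _⟩

lemma coh_equiv (D : PCohomologyData P M R) (n : ℕ) :
    Nonempty (D.cohomology n ≃ₗ[k] (LinearMap.ker (D.δ n) ⧸ (Bc D n).comap (LinearMap.ker (D.δ n)).subtype)) := by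
  cases n with
  | zero =>
    have : (Bc D 0).comap (LinearMap.ker (D.δ 0)).subtype = ⊥ := by
      change Submodule.comap _ ⊥ = ⊥
      rw [Submodule.comap_bot, Submodule.ker_subtype]
    exact ⟨(Submodule.quotEquivOfEqBot _ this).symm⟩
  | succ n => exact ⟨LinearEquiv.refl k _⟩

lemma hom_sub (D : PHomologyData P M R) (n : ℕ) [Subsingleton (M ⊗[A] (⋀[A]^n (Ω[A⁄k]) : Submodule A _))] :
    Subsingleton (D.homology n) := by
  obtain ⟨φ⟩ := hom_equiv D n
  exact φ.toEquiv.subsingleton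

lemma coh_sub (D : PCohomologyData P M R) (n : ℕ) [Subsingleton (multiDer k A M n)] :
    Subsingleton (D.cohomology n) := by
  obtain ⟨φ⟩ := coh_equiv D n
  exact φ.toEquiv.subsingleton

end Main
end PD

/-! ### STATEMENT 1:
Let `A` be a Calabi–Yau Poisson algebra of dimension `ℓ` over `k`: an affine smooth
Poisson algebra of Krull dimension `ℓ` such that `ω_A = ⋀[A]^ℓ Ω[A⁄k]` is free of rank
one as an `A`-module, with modular derivation `δ`, i.e. `ω_A ≅ ^δA` as left Poisson
modules, where `ω_A` carries the Lie-derivative left Poisson structure `Lω` and `^δA`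
has bracket `{a,b}_δ = {a,b} + δ(a)b`.  Then for every right Poisson module `M` and
every integer `i` there is an isomorphism `HP^i(M) ≅ HP_{ℓ-i}(M^δ)` of `k`-vector
spaces, where `M^δ` is the twist of `M` by `δ` (bracket `{m,a}_δ = {m,a} + δ(a) • m`);
for `i > ℓ` or `i < 0` this says that the corresponding groups vanish. -/
theorem stmt_1 {k A : Type u} [Field k] [IsAlgClosed k] [CharZero k]
    [CommRing A] [Algebra k A] [Algebra.Smooth k A] [Algebra.FiniteType k A]
    (ℓ : ℕ) (hdim : ringKrullDim A = ℓ)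
    (P : PoissonAlgebra k A)
    -- the Lie-derivative left Poisson structure on `ω_A`
    (Lω : LeftPMod P (⋀[A]^ℓ (Ω[A⁄k]) : Submodule A _))
    (hLω : ∀ (a f : A) (v : Fin ℓ → A),
      Lω.br a (f • wedgeD k A ℓ v)
        = (P.br a f) • wedgeD k A ℓ v
          + f • ∑ i : Fin ℓ, wedgeD k A ℓ (Function.update v i (P.br a (v i))))
    -- `δ` is the modular derivation: `ω_A ≅ ^δA` as left Poisson modules
    (δ : PoissonDerivation P)
    (e : (⋀[A]^ℓ (Ω[A⁄k]) : Submodule A _) ≃ₗ[A] A)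
    (hmod : ∀ (a : A) (x : (⋀[A]^ℓ (Ω[A⁄k]) : Submodule A _)),
      e (Lω.br a x) = P.br a (e x) + δ.d a * e x)
    -- a right Poisson module `M` and its twist `M^δ`
    (M : Type u) [AddCommGroup M] [Module k M] [Module A M] [IsScalarTower k A M]
    (R : RightPMod P M)
    (Rδ : RightPMod P M) (hRδ : ∀ m a, Rδ.br m a = R.br m a + δ.d a • m)
    -- Poisson (co)homology data
    (DC : PCohomologyData P M R)
    (Dδ : PHomologyData P M Rδ) :
    (∀ i : ℕ, i ≤ ℓ → Nonempty (DC.cohomology i ≃ₗ[k] Dδ.homology (ℓ - i))) ∧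
    (∀ i : ℕ, ℓ < i → Subsingleton (DC.cohomology i)) ∧
    (∀ j : ℕ, ℓ < j → Subsingleton (Dδ.homology j)) := by
  have hproj : Module.Projective A (Ω[A⁄k]) := inferInstance
  have h0 := PD.omega_vanish hdim e
  refine ⟨fun i hi => ?_, fun i hi => ?_, fun j hj => ?_⟩
  · obtain ⟨j, rfl⟩ := Nat.exists_eq_add_of_le hi
    rw [Nat.add_sub_cancel_left]
    obtain ⟨φ⟩ := PD.coh_equiv DC i
    obtain ⟨χ⟩ := PD.hom_equiv Dδ j
    have bij : ∀ {p q : ℕ}, p + q = i + j → Function.Bijective (PD.Psi k A M p q (PD.etil e.toLinearMap)) :=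
      fun h => PD.Psi_bij h0 e h
    have hu : ∀ n : ℕ, IsUnit ((-1 : ℤ)^n) := fun n => (isUnit_one.neg).pow n
    have hpow : ∀ (n : ℕ), ((-1 : ℤ)^n) * (-1)^n = 1 := fun n => by rw [← pow_add, ← two_mul, pow_mul]; simp
    obtain ⟨θ⟩ := PD.quotEquiv (LinearEquiv.ofBijective _ (bij (p := i) (q := j) rfl))
      (PD.Zh Dδ j) (LinearMap.range (Dδ.d j)) (LinearMap.ker (DC.δ i)) (PD.Bc DC i) (by
        intro x
        rw [LinearEquiv.ofBijective_apply, LinearMap.mem_ker]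
        cases j with
        | zero =>
          have := PD.multiDer_zero (M := M) h0 e (p := i+1) (by omega)
          exact ⟨fun _ => Subsingleton.elim _ _, fun _ => trivial⟩
        | succ q =>
          rw [PD.chain rfl h0 Lω hLω δ e hmod R Rδ hRδ DC Dδ]
          change Dδ.d q x = 0 ↔ _
          constructor
          · intro h; rw [h, map_zero, smul_zero]
          · intro h
            have h2 := congrArg (fun t => ((-1 : ℤ)^(i+1)) • t) h
            simp only [smul_smul, hpow, one_smul, smul_zero] at h2
            exact (bij (by omega)).1 (h2.trans (map_zero _).symm)) (by
        intro x
        rw [LinearEquiv.ofBijective_apply, LinearMap.mem_range]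
        cases i with
        | zero =>
          have := PD.tensor_zero (M := M) h0 (q := j+1) (by omega)
          change _ ↔ PD.Psi k A M 0 j _ x ∈ (⊥ : Submodule k _)
          rw [Submodule.mem_bot]
          constructor
          · rintro ⟨y, rfl⟩
            rw [Subsingleton.elim y 0, map_zero, map_zero]
          · intro h
            exact ⟨0, by rw [map_zero]; exact (bij rfl).1 ((map_zero _).trans h.symm)⟩
        | succ p =>
          have hc := PD.chain (p := p) (q := j) (by omega) h0 Lω hLω δ e hmod R Rδ hRδ DC Dδ
          change _ ↔ PD.Psi k A M (p+1) j _ x ∈ LinearMap.range (DC.δ p)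
          constructor
          · rintro ⟨y, rfl⟩
            refine ⟨(-1 : ℤ)^(p+1) • PD.Psi k A M p (j+1) (PD.etil e.toLinearMap) y, ?_⟩
            rw [map_zsmul, hc, smul_smul, hpow, one_smul]
          · rintro ⟨F, hF⟩
            obtain ⟨y, rfl⟩ := (bij (p := p) (q := j+1) (by omega)).2 F
            refine ⟨(-1 : ℤ)^(p+1) • y, (bij rfl).1 ?_⟩
            rw [map_zsmul, map_zsmul, ← hc, hF])
    exact ⟨φ.trans (θ.symm.trans χ.symm)⟩
  · have := PD.multiDer_zero (M := M) h0 e hi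
    exact PD.coh_sub DC i
  · have := PD.tensor_zero (M := M) h0 hj
    exact PD.hom_sub Dδ j
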